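/- arXiv:math/9812080 — 3 statements merged into one kernel-verified Lean document; each statement's English description precedes it below -/
import Mathlib

section
/- Let η∈ℕ^n be a composition and let E_η be the non-symmetric Macdonald polynomial. Then E_η(1,t,t^2,…,t^{n−1})·d_η(q,t) = t^{l(η)}·e_η(q,t), as an identity in ℚ(q,t), where E_η(1,t,…,t^{n−1}) denotes the evaluation of E_η at x_i = t^{i−1} for 1≤i≤n. -/
/- STATEMENT 10: E_η(1,t,t^2,…,t^{n−1})·d_η(q,t) = t^{l(η)}·e_η(q,t) in ℚ(q,t). -/

open Finset MvPolynomial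

namespace Stmt10

/-- leg colength l'_η(i) -/
def legCo (n : ℕ) (η : Fin n → ℕ) (i : Fin n) : ℕ :=
  (univ.filter fun k => k < i ∧ η i ≤ η k).card +
  (univ.filter fun k => i < k ∧ η i < η k).card

/-- leg length l(s) of the node s = (i,j) -/
def leg (n : ℕ) (η : Fin n → ℕ) (i : Fin n) (j : ℕ) : ℕ :=
  (univ.filter fun k => i < k ∧ j ≤ η k ∧ η k ≤ η i).card +
  (univ.filter fun k => k < i ∧ j ≤ η k + 1 ∧ η k + 1 ≤ η i).card

/-- The field K = ℚ(q,t). -/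
abbrev K : Type := FractionRing (MvPolynomial (Fin 2) ℚ)

noncomputable def q : K := algebraMap (MvPolynomial (Fin 2) ℚ) K (X 0)
noncomputable def t : K := algebraMap (MvPolynomial (Fin 2) ℚ) K (X 1)

/-- The polynomial ring K[x_1,…,x_n]. -/
abbrev P (n : ℕ) : Type := MvPolynomial (Fin n) K

/-- the automorphism s_k exchanging x_k and x_{k+1} (0-indexed; identity out of range) -/
noncomputable def sOp (n : ℕ) (k : ℕ) : P n →ₗ[K] P n :=
  if h : k + 1 < n then
    (rename (Equiv.swap (⟨k, Nat.lt_of_succ_lt h⟩ : Fin n) ⟨k + 1, h⟩)).toLinearMap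
  else LinearMap.id

/-- τ_1 : x_1 ↦ qv·x_1 (the first variable is 0-indexed) -/
noncomputable def tauOp (n : ℕ) (qv : K) : P n →ₗ[K] P n :=
  (aeval (fun j : Fin n => if (j : ℕ) = 0 then C qv * X j else X j)).toLinearMap

/-- ω := s_{n−1}⋯s_2 s_1 τ_1 -/
noncomputable def omegaOp (n : ℕ) (qv : K) : P n →ₗ[K] P n :=
  (List.range (n - 1)).foldl (fun acc k => sOp n k ∘ₗ acc) (tauOp n qv)

/-- The defining property of the Demazure–Lustig operators T_k (0-indexed), for the
parameter value tv: (x_k − x_{k+1})·(T_k f) = (x_k − x_{k+1})·tv·f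
+ (tv·x_k − x_{k+1})·(s_k f − f), i.e. T_k f is the polynomial quotient from the usual
definition. -/
def IsDL (n : ℕ) (tv : K) (T : ℕ → P n →ₗ[K] P n) : Prop :=
  ∀ k, ∀ hk : k + 1 < n, ∀ f : P n,
    (X (⟨k, Nat.lt_of_succ_lt hk⟩ : Fin n) - X ⟨k + 1, hk⟩) * T k f =
      (X (⟨k, Nat.lt_of_succ_lt hk⟩ : Fin n) - X ⟨k + 1, hk⟩) * (C tv * f) +
      (C tv * X (⟨k, Nat.lt_of_succ_lt hk⟩ : Fin n) - X ⟨k + 1, hk⟩) * (sOp n k f - f)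

/-- T_k⁻¹ = tv⁻¹ − 1 + tv⁻¹ T_k -/
noncomputable def Tinv (n : ℕ) (tv : K) (T : ℕ → P n →ₗ[K] P n) (k : ℕ) : P n →ₗ[K] P n :=
  tv⁻¹ • LinearMap.id - LinearMap.id + tv⁻¹ • T k

/-- The Cherednik operator Y_i (0-indexed i):
Y_i = tv^{i+1−n}·T_i⋯T_{n−2}·ω·T_0⁻¹⋯T_{i−1}⁻¹. -/
noncomputable def Yop (n : ℕ) (qv tv : K) (T : ℕ → P n →ₗ[K] P n) (i : Fin n) :
    P n →ₗ[K] P n :=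
  (tv ^ (n - 1 - (i : ℕ)))⁻¹ •
    (((List.range' (i : ℕ) (n - 1 - (i : ℕ))).foldr (fun k acc => T k ∘ₗ acc) LinearMap.id) ∘ₗ
      omegaOp n qv ∘ₗ
      ((List.range (i : ℕ)).foldr (fun k acc => Tinv n tv T k ∘ₗ acc) LinearMap.id))

/-- the decreasing rearrangement η⁺ of η -/
noncomputable def sortDesc (n : ℕ) (η : Fin n → ℕ) : Fin n → ℕ :=
  fun i => η (Tuple.sort η i.rev)

/-- dominance order on n-tuples (of equal sum) -/
def domLE (n : ℕ) (ν μ : Fin n → ℕ) : Prop :=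
  (∑ i, ν i = ∑ i, μ i) ∧
  ∀ p : Fin n, ∑ i ∈ univ.filter (· ≤ p), ν i ≤ ∑ i ∈ univ.filter (· ≤ p), μ i

def domLT (n : ℕ) (ν μ : Fin n → ℕ) : Prop := domLE n ν μ ∧ ν ≠ μ

/-- the order ≺ : ν ≺ η iff ν⁺ < η⁺, or ν⁺ = η⁺ and ν < η (dominance order) -/
noncomputable def prec (n : ℕ) (ν η : Fin n → ℕ) : Prop :=
  domLT n (sortDesc n ν) (sortDesc n η) ∨ (sortDesc n ν = sortDesc n η ∧ domLT n ν η)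

/-- E is the non-symmetric Macdonald polynomial for the composition η (with parameters
qv, tv and Demazure–Lustig operators T): it has the triangular form
E = x^η + Σ_{ν≺η} b_{ην} x^ν and satisfies Y_i E = qv^{η_i}·tv^{−l'_η(i)}·E for all i. -/
noncomputable def IsNSMac (n : ℕ) (qv tv : K) (T : ℕ → P n →ₗ[K] P n)
    (η : Fin n → ℕ) (E : P n) : Prop :=
  coeff (Finsupp.equivFunOnFinite.symm η) E = 1 ∧
  (∀ ν : Fin n →₀ ℕ, coeff ν E ≠ 0 → (ν : Fin n → ℕ) = η ∨ prec n (ν : Fin n → ℕ) η) ∧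
  ∀ i : Fin n, Yop n qv tv T i E = (qv ^ η i / tv ^ legCo n η i) • E

/-- d_η(q,t) = ∏_s (1 − q^{a(s)+1} t^{l(s)+1}) -/
noncomputable def dP (n : ℕ) (η : Fin n → ℕ) : K :=
  ∏ i : Fin n, ∏ j ∈ Finset.Icc 1 (η i), (1 - q ^ (η i - j + 1) * t ^ (leg n η i j + 1))

/-- e_η(q,t) = ∏_s (1 − q^{a'(s)+1} t^{n−l'(s)}) -/
noncomputable def eP (n : ℕ) (η : Fin n → ℕ) : K :=
  ∏ i : Fin n, ∏ j ∈ Finset.Icc 1 (η i), (1 - q ^ ((j - 1) + 1) * t ^ (n - legCo n η i))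

/-- l(η) = Σ_s l(s) -/
def lTot (n : ℕ) (η : Fin n → ℕ) : ℕ :=
  ∑ i : Fin n, ∑ j ∈ Finset.Icc 1 (η i), leg n η i j

end Stmt10

open Stmt10

/-
The Demazure–Lustig operators, multiplication by the variables and `ω` satisfy the relations of the
double affine Hecke algebra of type `GL_n`. Two operators therefore carry joint eigenvectors of the
Cherednik operators `Y_i` to joint eigenvectors: the intertwiner `T_k + c`, which exchanges two
consecutive eigenvalues, and `x_n ω`, which rotates the eigenvalues and multiplies one of them by
`q`. Starting from `1`, they produce an eigenvector for every composition `η`, unitriangular for a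
Bruhat-type order.

Evaluation at `(1, t, …, t^{n-1})` sends `T_k f` to `t f(1, …, t^{n-1})`. Hence an intertwiner
multiplies the value by the scalar `t + c`. The value of `ω f` is the value of `Y_1 f`, so `x_n ω`
also multiplies it by an explicit scalar. Both scalars agree with the changes of `d_η`, `e_η` and
`l(η)`, which gives the formula for these eigenvectors. They span the polynomial ring and their
joint eigenvalues are distinct, so every joint eigenvector is a multiple of one of them.
-/

namespace Stmt10

section JointEigenvectors

variable {R V ι σ : Type*} [Field R] [AddCommGroup V] [Module R V]

theorem mem_span_singleton_of_joint_eigenvector {Y : ι → Module.End R V} {F : σ → V}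
    {χ : σ → ι → R} (hF : ∀ ν i, Y i (F ν) = χ ν i • F ν) (hχ : Function.Injective χ)
    {η : σ} {x : V} (hx : ∀ i, Y i x = χ η i • x) (hspan : x ∈ Submodule.span R (Set.range F)) :
    x ∈ Submodule.span R {F η} := by
  classical
  obtain ⟨c, rfl⟩ := Finsupp.mem_span_range_iff_exists_finsupp.mp hspan
  set x := c.sum fun ν a => a • F ν with hx_def
  have hmem : x ∈ Submodule.span R (F '' insert η (c.support : Set σ)) :=
    Submodule.sum_mem _ fun ν hν => Submodule.smul_mem _ _
      (Submodule.subset_span ⟨ν, Set.mem_insert_of_mem _ hν, rfl⟩)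
  clear_value x
  generalize c.support = s at hmem
  induction s using Finset.induction_on with
  | empty => simpa using hmem
  | insert μ s _ ih =>
    by_cases hμ : μ = η
    · exact ih (by simpa [hμ] using hmem)
    obtain ⟨i, hi⟩ := Function.ne_iff.mp (hχ.ne hμ)
    -- `Y i - χ μ i` kills `F μ` and multiplies `x` by a nonzero scalar.
    have hkill : (Y i - χ μ i • 1) x ∈ Submodule.span R (F '' insert η (s : Set σ)) := by
      refine Submodule.span_induction (p := fun y _ => (Y i - χ μ i • 1) y ∈ _) ?_ (by simp)
        (fun y z _ _ hy hz => by simpa only [map_add] using add_mem hy hz)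
        (fun a y _ hy => by simpa only [map_smul] using Submodule.smul_mem _ a hy) hmem
      rintro _ ⟨ν, hν, rfl⟩
      have hscalar : (Y i - χ μ i • 1) (F ν) = (χ ν i - χ μ i) • F ν := by
        simp [hF, sub_smul]
      rw [hscalar]
      by_cases hνμ : ν = μ
      · simp [hνμ]
      · refine Submodule.smul_mem _ _ (Submodule.subset_span ⟨ν, ?_, rfl⟩)
        simpa [hνμ] using hν
    have hscalar : (Y i - χ μ i • 1) x = (χ η i - χ μ i) • x := by simp [hx, sub_smul]
    rw [hscalar, Submodule.smul_mem_iff _ (sub_ne_zero.mpr hi.symm)] at hkill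
    exact ih hkill

end JointEigenvectors

section DoubleAffineHecke

theorem semiconjBy_of_inverses {M : Type*} [Monoid M] {a x x' y y' : M} (h : SemiconjBy a x y)
    (hx : x * x' = 1) (hy : y' * y = 1) : SemiconjBy a x' y' :=
  calc a * x' = y' * (y * a) * x' := by rw [← mul_assoc y', hy, one_mul]
    _ = y' * (a * x) * x' := by rw [h.eq]
    _ = y' * a := by rw [mul_assoc, mul_assoc a, hx, mul_one]

/-- The ordered product `U a * U (a + 1) * ⋯ * U (a + m - 1)`. -/
def ascProd {M : Type*} [Monoid M] (U : ℕ → M) (a m : ℕ) : M :=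
  ((List.range' a m).map U).prod

section AscProd

variable {M : Type*} [Monoid M] {U : ℕ → M} {a m : ℕ} {c : M}

@[simp]
theorem ascProd_zero : ascProd U a 0 = 1 := rfl

theorem ascProd_succ : ascProd U a (m + 1) = U a * ascProd U (a + 1) m := by
  simp [ascProd, List.range'_succ]

theorem ascProd_add (m' : ℕ) : ascProd U a (m + m') = ascProd U a m * ascProd U (a + m) m' := by
  simp [ascProd, ← List.range'_append_1]

theorem ascProd_succ_last : ascProd U a (m + 1) = ascProd U a m * U (a + m) := by
  rw [ascProd_add, ascProd_succ (m := 0), ascProd_zero, mul_one]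

theorem commute_ascProd (h : ∀ l, a ≤ l → l < a + m → Commute c (U l)) :
    Commute c (ascProd U a m) := by
  refine Commute.list_prod_right _ _ fun x hx => ?_
  obtain ⟨l, hl, rfl⟩ := List.mem_map.mp hx
  obtain ⟨hal, hlm⟩ := List.mem_range'_1.mp hl
  exact h l hal hlm

theorem semiconjBy_ascProd_shift (h : ∀ l, a ≤ l → l < a + m → SemiconjBy c (U (l + 1)) (U l)) :
    SemiconjBy c (ascProd U (a + 1) m) (ascProd U a m) := by
  induction m with
  | zero => exact SemiconjBy.one_right c
  | succ m ih =>
    rw [ascProd_succ_last, ascProd_succ_last, add_right_comm]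
    exact (ih fun l hl hlm => h l hl (by omega)).mul_right (h _ (by omega) (by omega))

end AscProd

variable {R A : Type*} [Field R] [Ring A] [Algebra R A]

/-- The inverse `t⁻¹ - 1 + t⁻¹ a` of an element `a` satisfying the Hecke relation
`(a - t) * (a + 1) = 0`. -/
def heckeInv (tv : R) (a : A) : A := tv⁻¹ • 1 - 1 + tv⁻¹ • a

/-- The relations of the double affine Hecke algebra of type `GL_{N+1}` (without the inverses of
`W` and of the `x j`): Hecke generators `T 0, …, T (N - 1)`, multiplication
operators `x 0, …, x N` by the variables, and the affine rotation `W`. -/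
structure IsDoubleAffineHecke (N : ℕ) (qv tv : R) (T x : ℕ → A) (W : A) : Prop where
  tv_ne_zero : tv ≠ 0
  sq : ∀ k < N, T k * T k = (tv - 1) • T k + tv • 1
  commute : ∀ k l, k + 1 < l → l < N → Commute (T k) (T l)
  braid : ∀ k, k + 1 < N → T k * T (k + 1) * T k = T (k + 1) * T k * T (k + 1)
  semiconj_rot : ∀ k, k + 1 < N → SemiconjBy W (T (k + 1)) (T k)
  semiconj_rot_rot : 0 < N → SemiconjBy (W * W) (T 0) (T (N - 1))
  commute_x : ∀ k < N, ∀ j ≤ N, j ≠ k → j ≠ k + 1 → Commute (x j) (T k)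
  mul_x : ∀ k < N, T k * x k = tv • (x (k + 1) * heckeInv tv (T k))
  semiconj_rot_x_zero : SemiconjBy W (x 0) (qv • x N)
  semiconj_rot_x_succ : ∀ k < N, SemiconjBy W (x (k + 1)) (x k)

/-- The Cherednik element `Y_j = t^{j-N} T_j ⋯ T_{N-1} W T_0⁻¹ ⋯ T_{j-1}⁻¹`, with the inverses
given by `heckeInv`. -/
def cherednik (N : ℕ) (tv : R) (T : ℕ → A) (W : A) (j : ℕ) : A :=
  (tv ^ (N - j))⁻¹ • (ascProd T j (N - j) * W * ascProd (fun k => heckeInv tv (T k)) 0 j)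

namespace IsDoubleAffineHecke

variable {N : ℕ} {qv tv : R} {T x : ℕ → A} {W : A}

section Inverses

theorem mul_inv (h : IsDoubleAffineHecke N qv tv T x W) {k : ℕ} (hk : k < N) :
    T k * heckeInv tv (T k) = 1 := by
  have ht := h.tv_ne_zero
  rw [heckeInv, mul_add, mul_sub, mul_smul_comm, mul_smul_comm, mul_one, h.sq k hk]
  match_scalars <;> field_simp
  ring

theorem inv_mul (h : IsDoubleAffineHecke N qv tv T x W) {k : ℕ} (hk : k < N) :
    heckeInv tv (T k) * T k = 1 := by
  have ht := h.tv_ne_zero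
  rw [heckeInv, add_mul, sub_mul, smul_mul_assoc, smul_mul_assoc, one_mul, h.sq k hk]
  match_scalars <;> field_simp
  ring

theorem commute_inv (h : IsDoubleAffineHecke N qv tv T x W) {k : ℕ} (hk : k < N) {a : A}
    (ha : Commute a (T k)) : Commute a (heckeInv tv (T k)) :=
  semiconjBy_of_inverses ha (h.mul_inv hk) (h.inv_mul hk)

theorem inv_mul_x (h : IsDoubleAffineHecke N qv tv T x W) {k : ℕ} (hk : k < N) :
    heckeInv tv (T k) * x (k + 1) = tv⁻¹ • (x k * T k) := by
  have hmul : x k = tv • (heckeInv tv (T k) * x (k + 1) * heckeInv tv (T k)) := by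
    rw [mul_assoc, ← mul_smul_comm, ← h.mul_x k hk, ← mul_assoc, h.inv_mul hk, one_mul]
  conv_rhs => rw [hmul]
  rw [smul_mul_assoc, smul_smul, inv_mul_cancel₀ h.tv_ne_zero, one_smul, mul_assoc, h.inv_mul hk,
    mul_one]

end Inverses

section Braids

theorem commute_of_far (h : IsDoubleAffineHecke N qv tv T x W) {k l : ℕ} (hk : k < N) (hl : l < N)
    (hkl : k + 1 < l ∨ l + 1 < k) : Commute (T k) (T l) :=
  hkl.elim (fun hlt => h.commute k l hlt hl) fun hlt => (h.commute l k hlt hk).symm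

/-- Stated for `U = T` and for `U = T⁻¹` simultaneously. -/
theorem semiconjBy_ascProd_of_braid {U : ℕ → A} {a m k : ℕ} (hak : a ≤ k) (hkm : k + 2 ≤ a + m)
    (hbraid : SemiconjBy (U k * U (k + 1)) (T k) (T (k + 1)))
    (hbelow : ∀ l < k, Commute (T (k + 1)) (U l))
    (habove : ∀ l, k + 1 < l → l < a + m → Commute (T k) (U l)) :
    SemiconjBy (ascProd U a m) (T k) (T (k + 1)) := by
  obtain ⟨b, rfl⟩ := Nat.exists_eq_add_of_le hak
  obtain ⟨c, hc⟩ := Nat.exists_eq_add_of_le hkm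
  obtain rfl : m = b + (2 + c) := by omega
  have hsplit : ascProd U a (b + (2 + c)) =
      ascProd U a b * (U (a + b) * U (a + b + 1) * ascProd U (a + b + 2) c) := by
    rw [ascProd_add, ascProd_add, ascProd_succ, ascProd_succ, ascProd_zero, mul_one]
  rw [hsplit]
  have hleft : Commute (ascProd U a b) (T (a + b + 1)) :=
    (commute_ascProd fun l _ hl => hbelow l hl).symm
  have hright : Commute (ascProd U (a + b + 2) c) (T (a + b)) :=
    (commute_ascProd fun l hl hlc => habove l (by omega) (by omega)).symm
  exact SemiconjBy.mul_left hleft (hbraid.mul_left hright)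

theorem semiconjBy_ascProd (h : IsDoubleAffineHecke N qv tv T x W) {a m k : ℕ} (hak : a ≤ k)
    (hkm : k + 2 ≤ a + m) (hN : a + m ≤ N) : SemiconjBy (ascProd T a m) (T k) (T (k + 1)) := by
  refine semiconjBy_ascProd_of_braid hak hkm ?_
    (fun l hl => h.commute_of_far (by omega) (by omega) (by omega))
    (fun l hl hlm => h.commute_of_far (by omega) (by omega) (by omega))
  rw [SemiconjBy, h.braid k (by omega), mul_assoc]

theorem semiconjBy_ascProd_inv (h : IsDoubleAffineHecke N qv tv T x W) {j k : ℕ}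
    (hkj : k + 1 < j) (hj : j ≤ N) :
    SemiconjBy (ascProd (fun k => heckeInv tv (T k)) 0 j) (T k) (T (k + 1)) := by
  refine semiconjBy_ascProd_of_braid (Nat.zero_le k) (by omega) ?_
    (fun l hl => h.commute_inv (by omega) (h.commute_of_far (by omega) (by omega) (by omega)))
    (fun l hl hlm => h.commute_inv (by omega) (h.commute_of_far (by omega) (by omega) (by omega)))
  have hk := h.mul_inv (k := k) (by omega)
  have hk' := h.inv_mul (k := k) (by omega)
  have hsucc := h.mul_inv (k := k + 1) (by omega)
  have hsucc' := h.inv_mul (k := k + 1) (by omega)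
  have hbraid : SemiconjBy (T (k + 1) * T k) (T (k + 1)) (T k) := by
    rw [SemiconjBy, ← h.braid k (by omega), mul_assoc]
  have hinv : (heckeInv tv (T k) * heckeInv tv (T (k + 1))) * (T (k + 1) * T k) = 1 := by
    rw [mul_assoc, ← mul_assoc _ (T (k + 1)), hsucc', one_mul, hk']
  have hinv' : (T (k + 1) * T k) * (heckeInv tv (T k) * heckeInv tv (T (k + 1))) = 1 := by
    rw [mul_assoc, ← mul_assoc (T k), hk, one_mul, hsucc]
  exact SemiconjBy.units_inv_symm_left (a := ⟨_, _, hinv', hinv⟩) hbraid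

end Braids

section Cherednik

variable (h : IsDoubleAffineHecke N qv tv T x W)
include h

theorem commute_cherednik {k j : ℕ} (hk : k < N) (hj : j ≤ N) (hjk : j ≠ k) (hjk' : j ≠ k + 1) :
    Commute (T k) (cherednik N tv T W j) := by
  refine (Commute.smul_left ?_ _).symm
  rcases Nat.lt_or_gt_of_ne hjk with hlt | hgt
  · obtain ⟨k, rfl⟩ : ∃ l, k = l + 1 := ⟨k - 1, by omega⟩
    have hright : Commute (ascProd (fun k => heckeInv tv (T k)) 0 j) (T (k + 1)) :=
      (commute_ascProd fun l _ hl =>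
        h.commute_inv (by omega) (h.commute_of_far hk (by omega) (by omega))).symm
    exact ((h.semiconjBy_ascProd (by omega) (by omega) (by omega)).mul_left
      (h.semiconj_rot k hk)).mul_left hright
  · have hleft : Commute (ascProd T j (N - j)) (T k) :=
      (commute_ascProd fun l hl _ => h.commute_of_far hk (by omega) (by omega)).symm
    exact (SemiconjBy.mul_left hleft (h.semiconj_rot k (by omega))).mul_left
      (h.semiconjBy_ascProd_inv (by omega) hj)

theorem mul_cherednik_succ_mul {k : ℕ} (hk : k < N) :
    T k * cherednik N tv T W (k + 1) * T k = tv • cherednik N tv T W k := by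
  have hexp : N - k = N - (k + 1) + 1 := by omega
  have ht := h.tv_ne_zero
  simp only [cherednik, mul_smul_comm, smul_mul_assoc, smul_smul]
  rw [hexp, ascProd_succ (a := k), ascProd_succ_last (a := 0), Nat.zero_add, pow_succ]
  simp only [mul_assoc, h.inv_mul hk, mul_one]
  congr 1
  field_simp

theorem cherednik_succ_mul {k : ℕ} (hk : k < N) :
    cherednik N tv T W (k + 1) * T k =
      T k * cherednik N tv T W k + (1 - tv) • cherednik N tv T W k := by
  have ht := h.tv_ne_zero
  calc cherednik N tv T W (k + 1) * T k
      = heckeInv tv (T k) * (T k * cherednik N tv T W (k + 1) * T k) := by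
        rw [mul_assoc, ← mul_assoc, h.inv_mul hk, one_mul]
    _ = tv • (heckeInv tv (T k) * cherednik N tv T W k) := by
        rw [h.mul_cherednik_succ_mul hk, mul_smul_comm]
    _ = _ := by
        rw [heckeInv, add_mul, sub_mul, smul_mul_assoc, smul_mul_assoc, one_mul]
        match_scalars <;> field_simp

theorem cherednik_mul {k : ℕ} (hk : k < N) :
    cherednik N tv T W k * T k =
      T k * cherednik N tv T W (k + 1) + (tv - 1) • cherednik N tv T W k := by
  have ht := h.tv_ne_zero
  have hrec := h.mul_cherednik_succ_mul hk
  have hY : cherednik N tv T W k = tv⁻¹ • (T k * cherednik N tv T W (k + 1) * T k) := by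
    rw [hrec, smul_smul, inv_mul_cancel₀ ht, one_smul]
  calc cherednik N tv T W k * T k
      = tv⁻¹ • (T k * cherednik N tv T W (k + 1) * (T k * T k)) := by
        rw [hY, smul_mul_assoc, mul_assoc _ (T k) (T k)]
    _ = tv⁻¹ • ((tv - 1) • (T k * cherednik N tv T W (k + 1) * T k) +
          tv • (T k * cherednik N tv T W (k + 1))) := by
        rw [h.sq k hk, mul_add, mul_smul_comm, mul_smul_comm, mul_one]
    _ = _ := by
        rw [hrec]
        match_scalars <;> field_simp

theorem ascProd_inv_mul_x {j : ℕ} (hj : j ≤ N) :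
    ascProd (fun k => heckeInv tv (T k)) 0 j * x j = (tv ^ j)⁻¹ • (x 0 * ascProd T 0 j) := by
  induction j with
  | zero => simp
  | succ j ih =>
    rw [ascProd_succ_last, ascProd_succ_last, Nat.zero_add, mul_assoc, h.inv_mul_x hj,
      mul_smul_comm, ← mul_assoc, ih (by omega), smul_mul_assoc, smul_smul, mul_assoc, pow_succ',
      _root_.mul_inv]

theorem cherednik_last_mul_raise :
    cherednik N tv T W N * (x N * W) = qv • (x N * W * cherednik N tv T W 0) := by
  calc cherednik N tv T W N * (x N * W)
      = W * (ascProd (fun k => heckeInv tv (T k)) 0 N * x N) * W := by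
        simp [cherednik, mul_assoc]
    _ = (tv ^ N)⁻¹ • ((W * x 0) * ascProd T 0 N * W) := by
        rw [h.ascProd_inv_mul_x le_rfl, mul_smul_comm, smul_mul_assoc]
        simp only [mul_assoc]
    _ = qv • (x N * W * cherednik N tv T W 0) := by
        rw [h.semiconj_rot_x_zero.eq]
        simp only [cherednik, smul_mul_assoc, mul_smul_comm, smul_smul, mul_assoc, Nat.sub_zero,
          ascProd_zero, mul_one, mul_comm qv]

theorem rot_rot_mul_ascProd_inv {j : ℕ} (hj : j < N) :
    W * W * ascProd (fun k => heckeInv tv (T k)) 0 (j + 1) =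
      heckeInv tv (T (N - 1)) * (W * ascProd (fun k => heckeInv tv (T k)) 0 j * W) := by
  have hfirst : SemiconjBy (W * W) (heckeInv tv (T 0)) (heckeInv tv (T (N - 1))) :=
    semiconjBy_of_inverses (h.semiconj_rot_rot (by omega)) (h.mul_inv (by omega))
      (h.inv_mul (by omega))
  have hshift : SemiconjBy W (ascProd (fun k => heckeInv tv (T k)) (0 + 1) j)
      (ascProd (fun k => heckeInv tv (T k)) 0 j) :=
    semiconjBy_ascProd_shift fun l _ hl => semiconjBy_of_inverses (h.semiconj_rot l (by omega))
      (h.mul_inv (by omega)) (h.inv_mul (by omega))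
  rw [ascProd_succ, ← mul_assoc, hfirst.eq, mul_assoc, mul_assoc W W, hshift.eq, mul_assoc W]

theorem ascProd_mul_rot_mul_raise {j m : ℕ} (hN : N = j + m + 1) :
    ascProd T j (m + 1) * W * ascProd (fun k => heckeInv tv (T k)) 0 j * (x N * W) =
      tv • (x N * W * (ascProd T (j + 1) m * W *
        ascProd (fun k => heckeInv tv (T k)) 0 (j + 1))) := by
  subst hN
  set S : ℕ → A := fun k => heckeInv tv (T k)
  have hTx : T (j + m) * x (j + m) = tv • (x (j + m + 1) * S (j + m)) := h.mul_x _ (by omega)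
  have hWW : W * W * ascProd S 0 (j + 1) = S (j + m) * (W * ascProd S 0 j * W) :=
    h.rot_rot_mul_ascProd_inv (by omega)
  have hxS : Commute (x (j + m + 1)) (ascProd S 0 j) := commute_ascProd fun l _ hl =>
    h.commute_inv (by omega) (h.commute_x l (by omega) _ le_rfl (by omega) (by omega))
  have hxT : Commute (x (j + m + 1)) (ascProd T j m) := commute_ascProd fun l _ hl =>
    h.commute_x l (by omega) _ le_rfl (by omega) (by omega)
  have hWT : SemiconjBy W (ascProd T (j + 1) m) (ascProd T j m) :=
    semiconjBy_ascProd_shift fun l _ hl => h.semiconj_rot l (by omega)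
  calc ascProd T j (m + 1) * W * ascProd S 0 j * (x (j + m + 1) * W)
      = ascProd T j m * T (j + m) * (W * x (j + m + 1)) * ascProd S 0 j * W := by
        simp only [ascProd_succ_last, mul_assoc]
        rw [← mul_assoc (ascProd S 0 j), ← hxS.eq, mul_assoc]
    _ = ascProd T j m * (T (j + m) * x (j + m)) * (W * ascProd S 0 j * W) := by
        rw [(h.semiconj_rot_x_succ (j + m) (by omega)).eq]
        simp only [mul_assoc]
    _ = tv • (x (j + m + 1) * ascProd T j m * (S (j + m) * (W * ascProd S 0 j * W))) := by
        rw [hTx, mul_smul_comm, smul_mul_assoc, hxT.eq]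
        simp only [mul_assoc]
    _ = tv • (x (j + m + 1) * W * (ascProd T (j + 1) m * W * ascProd S 0 (j + 1))) := by
        rw [← hWW]
        simp only [mul_assoc]
        rw [← mul_assoc W (ascProd T (j + 1) m), hWT.eq, mul_assoc]

theorem semiconjBy_raise_cherednik {j : ℕ} (hj : j < N) :
    SemiconjBy (x N * W) (cherednik N tv T W (j + 1)) (cherednik N tv T W j) := by
  obtain ⟨m, hN⟩ := Nat.exists_eq_add_of_le hj
  have ht := h.tv_ne_zero
  have hm : N - j = m + 1 := by omega
  have hm' : N - (j + 1) = m := by omega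
  rw [SemiconjBy, cherednik, cherednik, hm, hm', mul_smul_comm, smul_mul_assoc,
    h.ascProd_mul_rot_mul_raise (by omega), smul_smul, pow_succ]
  congr 1
  field_simp

end Cherednik

section Eigenvectors

variable {V : Type*} [AddCommGroup V] [Module R V] {T x : ℕ → Module.End R V}
  {W : Module.End R V} {χ : ℕ → R} {v : V}

theorem cherednik_apply_intertwine (h : IsDoubleAffineHecke N qv tv T x W)
    (hv : ∀ j ≤ N, cherednik N tv T W j v = χ j • v) {k : ℕ} (hk : k < N) {c : R}
    (hc : c * (χ k - χ (k + 1)) = (1 - tv) * χ k) {j : ℕ} (hj : j ≤ N) :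
    cherednik N tv T W j (T k v + c • v) = χ (Equiv.swap k (k + 1) j) • (T k v + c • v) := by
  rw [map_add, map_smul, hv j hj]
  by_cases hjk : j = k
  · subst hjk
    have hY := LinearMap.congr_fun (h.cherednik_mul hk) v
    simp only [Module.End.mul_apply, LinearMap.add_apply, LinearMap.smul_apply, hv j hj,
      hv (j + 1) hk, map_smul] at hY
    rw [hY, Equiv.swap_apply_left]
    match_scalars
    · ring
    · linear_combination hc
  by_cases hjk' : j = k + 1
  · subst hjk'
    have hY := LinearMap.congr_fun (h.cherednik_succ_mul hk) v
    simp only [Module.End.mul_apply, LinearMap.add_apply, LinearMap.smul_apply,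
      hv k hk.le, map_smul] at hY
    rw [hY, Equiv.swap_apply_right]
    match_scalars
    · ring
    · linear_combination -hc
  · have hY := LinearMap.congr_fun ((h.commute_cherednik hk hj hjk hjk').eq) v
    simp only [Module.End.mul_apply, hv j hj, map_smul] at hY
    rw [← hY, Equiv.swap_apply_of_ne_of_ne hjk hjk', smul_add, smul_comm c]

theorem cherednik_last_apply_raise (h : IsDoubleAffineHecke N qv tv T x W) {c : R}
    (hv : cherednik N tv T W 0 v = c • v) :
    cherednik N tv T W N (x N (W v)) = (qv * c) • x N (W v) := by
  have hY := LinearMap.congr_fun h.cherednik_last_mul_raise v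
  simpa only [Module.End.mul_apply, LinearMap.smul_apply, hv, map_smul, smul_smul] using hY

theorem cherednik_apply_raise (h : IsDoubleAffineHecke N qv tv T x W) {j : ℕ} (hj : j < N) {c : R}
    (hv : cherednik N tv T W (j + 1) v = c • v) :
    cherednik N tv T W j (x N (W v)) = c • x N (W v) := by
  have hY := LinearMap.congr_fun ((h.semiconjBy_raise_cherednik hj).eq) v
  simpa only [Module.End.mul_apply, hv, map_smul] using hY.symm

end Eigenvectors

end IsDoubleAffineHecke

section Character

variable {N : ℕ} {tv : R} {V : Type*} [AddCommGroup V] [Module R V] {T : ℕ → Module.End R V}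
  {W : Module.End R V}

theorem ascProd_apply_of_eigenvector {U : ℕ → Module.End R V} {u : R} {v : V} {a m : ℕ}
    (hU : ∀ k, a ≤ k → k < a + m → U k v = u • v) : ascProd U a m v = u ^ m • v := by
  induction m with
  | zero => simp
  | succ m ih =>
    rw [ascProd_succ_last, Module.End.mul_apply, hU _ (by omega) (by omega), map_smul,
      ih fun k hak hk => hU k hak (by omega), smul_smul, pow_succ']

theorem cherednik_apply_of_trivial (ht : tv ≠ 0) {v : V} (hT : ∀ k < N, T k v = tv • v)
    (hW : W v = v) {j : ℕ} (hj : j ≤ N) : cherednik N tv T W j v = (tv ^ j)⁻¹ • v := by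
  have hinv : ∀ k < N, heckeInv tv (T k) v = tv⁻¹ • v := fun k hk => by
    simp [heckeInv, hT k hk, smul_smul, ht]
  rw [cherednik, LinearMap.smul_apply, Module.End.mul_apply, Module.End.mul_apply,
    ascProd_apply_of_eigenvector fun k _ hk => hinv k (by omega), map_smul, map_smul, hW,
    ascProd_apply_of_eigenvector fun k _ hk => hT k (by omega), smul_smul, smul_smul, inv_pow]
  congr 1
  field_simp

theorem apply_cherednik_zero_of_trivial (ht : tv ≠ 0) {φ : Module.Dual R V}
    (hφ : ∀ k < N, ∀ v, φ (T k v) = tv * φ v) (v : V) :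
    φ (cherednik N tv T W 0 v) = φ (W v) := by
  have hprod : ∀ a m, a + m ≤ N → ∀ w, φ (ascProd T a m w) = tv ^ m * φ w := by
    intro a m
    induction m with
    | zero => simp
    | succ m ih =>
      intro hm w
      rw [ascProd_succ_last, Module.End.mul_apply, ih (by omega), hφ _ (by omega), pow_succ,
        mul_assoc]
  rw [cherednik, ascProd_zero, mul_one, LinearMap.smul_apply, map_smul, Module.End.mul_apply,
    hprod _ _ (by omega), Nat.sub_zero, smul_eq_mul, inv_mul_cancel_left₀ (pow_ne_zero N ht)]

end Character

end DoubleAffineHecke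

section Evaluation

instance : Infinite K :=
  Infinite.of_injective (algebraMap (MvPolynomial (Fin 2) ℚ) K) (IsFractionRing.injective _ _)

theorem ext_of_eval_injective {σ R : Type*} [Finite σ] [CommRing R] [IsDomain R] [Infinite R]
    {f g : MvPolynomial σ R} (h : ∀ v : σ → R, Function.Injective v → eval v f = eval v g) :
    f = g := by
  classical
  have := Fintype.ofFinite σ
  have hD : ∏ p ∈ (univ : Finset σ).offDiag, (X p.1 - X p.2 : MvPolynomial σ R) ≠ 0 :=
    Finset.prod_ne_zero_iff.mpr fun p hp h0 =>
      (Finset.mem_offDiag.mp hp).2.2 (X_injective (sub_eq_zero.mp h0))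
  refine mul_left_cancel₀ hD (MvPolynomial.funext fun v => ?_)
  by_cases hv : Function.Injective v
  · rw [map_mul, map_mul, h v hv]
  · obtain ⟨a, b, hab, hne⟩ : ∃ a b, v a = v b ∧ a ≠ b := by
      simpa [Function.Injective] using hv
    have hzero : eval v (∏ p ∈ (univ : Finset σ).offDiag, (X p.1 - X p.2)) = 0 := by
      rw [map_prod]
      exact Finset.prod_eq_zero (i := (a, b)) (by simp [hne]) (by simp [hab])
    rw [map_mul, map_mul, hzero, zero_mul, zero_mul]

variable {N : ℕ}

/-- The simple transposition of the `k`-th and `(k + 1)`-st positions. -/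
abbrev adjSwap (k : Fin N) : Equiv.Perm (Fin (N + 1)) := Equiv.swap k.castSucc k.succ

theorem adjSwap_apply_of_far {k l : Fin N} (hkl : (k : ℕ) + 1 < l ∨ (l : ℕ) + 1 < k) :
    adjSwap k l.castSucc = l.castSucc ∧ adjSwap k l.succ = l.succ := by
  constructor <;> refine Equiv.swap_apply_of_ne_of_ne ?_ ?_ <;>
    simp only [ne_eq, Fin.ext_iff, Fin.val_castSucc, Fin.val_succ] <;> omega

theorem adjSwap_succAbove (k i : Fin N) :
    adjSwap k (k.castSucc.succAbove i) = k.succ.succAbove i := by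
  simp only [Fin.succAbove, Equiv.swap_apply_def, Fin.ext_iff, Fin.lt_def, Fin.val_castSucc,
    Fin.val_succ]
  split_ifs <;> simp only [Fin.val_castSucc, Fin.val_succ] at * <;> omega

theorem adjSwap_commute {k l : Fin N} (hkl : (k : ℕ) + 1 < l) :
    adjSwap k * adjSwap l = adjSwap l * adjSwap k := by
  obtain ⟨h₁, h₂⟩ := adjSwap_apply_of_far (Or.inl hkl)
  rw [← mul_inv_eq_iff_eq_mul, ← Equiv.swap_apply_apply, h₁, h₂]

theorem adjSwap_braid {k l : Fin N} (hkl : (l : ℕ) = k + 1) :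
    adjSwap k * adjSwap l * adjSwap k = adjSwap l * adjSwap k * adjSwap l := by
  have hb : l.castSucc = k.succ := Fin.ext hkl
  have hac : k.castSucc ≠ l.succ := by simp [Fin.ext_iff]; omega
  rw [adjSwap, adjSwap, hb, Equiv.swap_mul_swap_mul_swap (Fin.castSucc_lt_succ).ne hac,
    Equiv.swap_comm k.castSucc k.succ, Equiv.swap_comm k.succ l.succ,
    Equiv.swap_mul_swap_mul_swap (hb ▸ (Fin.castSucc_lt_succ (i := l)).ne') hac.symm,
    Equiv.swap_comm]

variable {qv tv : K} {T : ℕ → P (N + 1) →ₗ[K] P (N + 1)} {v : Fin (N + 1) → K}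

theorem eval_sOp (k : Fin N) (f : P (N + 1)) :
    eval v (sOp (N + 1) k f) = eval (v ∘ adjSwap k) f := by
  have hk : (k : ℕ) + 1 < N + 1 := by omega
  simp only [sOp, hk, ↓reduceDIte, AlgHom.toLinearMap_apply, eval_rename]
  rfl

theorem IsDL.eval_apply (hT : IsDL (N + 1) tv T) (k : Fin N) (hv : v k.castSucc ≠ v k.succ)
    (f : P (N + 1)) :
    eval v (T k f) = (tv * v k.castSucc - v k.succ) / (v k.castSucc - v k.succ) *
        eval (v ∘ adjSwap k) f +
      (1 - tv) * v k.succ / (v k.castSucc - v k.succ) * eval v f := by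
  have hdef : (X k.castSucc - X k.succ) * T k f = (X k.castSucc - X k.succ) * (C tv * f) +
      (C tv * X k.castSucc - X k.succ) * (sOp (N + 1) k f - f) := hT k (by omega) f
  have heval := congrArg (eval v) hdef
  simp only [map_mul, map_sub, map_add, eval_X, eval_C, eval_sOp] at heval
  have h0 := sub_ne_zero.mpr hv
  field_simp
  linear_combination heval

/-- The point at which `f` is evaluated when `ω f` is evaluated at `v`. -/
noncomputable def rot (qv : K) (v : Fin (N + 1) → K) : Fin (N + 1) → K :=
  Fin.cons (qv * v (Fin.last N)) (Fin.init v)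

@[simp]
theorem rot_zero : rot qv v 0 = qv * v (Fin.last N) := rfl

@[simp]
theorem rot_succ (i : Fin N) : rot qv v i.succ = v i.castSucc := rfl

theorem rot_comp_adjSwap {k l : Fin N} (hkl : (l : ℕ) = k + 1) :
    rot qv v ∘ adjSwap l = rot qv (v ∘ adjSwap k) := by
  have hb : l.castSucc = k.succ := Fin.ext hkl
  funext i
  cases i using Fin.cases with
  | zero =>
    have h₁ : adjSwap l 0 = 0 :=
      Equiv.swap_apply_of_ne_of_ne (by simp [hb, Fin.ext_iff]) (by simp [Fin.ext_iff])
    have h₂ : adjSwap k (Fin.last N) = Fin.last N :=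
      Equiv.swap_apply_of_ne_of_ne (by simp [Fin.ext_iff]; omega) (by simp [Fin.ext_iff]; omega)
    simp only [Function.comp_apply, h₁, rot_zero, h₂]
  | succ i =>
    have hswap : adjSwap l i.succ = (if i = k then l else if i = l then k else i).succ := by
      simp only [Equiv.swap_apply_def, hb, Fin.ext_iff, Fin.val_succ]
      split_ifs <;> simp only [Fin.val_succ] <;> omega
    have hswap' : adjSwap k i.castSucc =
        (if i = k then l else if i = l then k else i).castSucc := by
      simp only [Equiv.swap_apply_def, ← hb, Fin.ext_iff, Fin.val_castSucc]
      split_ifs <;> simp only [Fin.val_castSucc]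
    simp only [Function.comp_apply, hswap, rot_succ, hswap']

theorem rot_last {v : Fin (N + 2) → K} :
    rot qv v (Fin.last (N + 1)) = v (Fin.last N).castSucc := rfl

theorem rot_rot_comp_adjSwap {v : Fin (N + 2) → K} :
    rot qv (rot qv v) ∘ adjSwap 0 = rot qv (rot qv (v ∘ adjSwap (Fin.last N))) := by
  funext i
  cases i using Fin.cases with
  | zero =>
    have hswap : adjSwap (0 : Fin (N + 1)) 0 = (0 : Fin (N + 1)).succ := Equiv.swap_apply_left _ _
    simp only [Function.comp_apply, hswap, rot_succ, Fin.castSucc_zero, rot_zero, rot_last,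
      Equiv.swap_apply_left, Fin.succ_last]
  | succ i =>
    cases i using Fin.cases with
    | zero =>
      have hswap : adjSwap (0 : Fin (N + 1)) (0 : Fin (N + 1)).succ = 0 :=
        Equiv.swap_apply_right _ _
      simp only [Function.comp_apply, hswap, rot_succ, Fin.castSucc_zero, rot_zero,
        ← Fin.succ_last, Equiv.swap_apply_right]
    | succ i =>
      have hswap : adjSwap (0 : Fin (N + 1)) i.succ.succ = i.succ.succ :=
        Equiv.swap_apply_of_ne_of_ne (by simp [Fin.ext_iff]) (by simp [Fin.ext_iff])
      have hswap' : adjSwap (Fin.last N) i.castSucc.castSucc = i.castSucc.castSucc :=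
        Equiv.swap_apply_of_ne_of_ne (by simp [Fin.ext_iff]; omega) (by simp [Fin.ext_iff]; omega)
      simp only [Function.comp_apply, hswap, rot_succ, ← Fin.succ_castSucc, hswap']

/-- `ω` is built up one transposition at a time: after `m` of them, the variable scaled by `q` sits
in position `m`. -/
theorem eval_foldl_sOp (m : Fin (N + 1)) (f : P (N + 1)) :
    eval v ((List.range m).foldl (fun acc k => sOp (N + 1) k ∘ₗ acc) (tauOp (N + 1) qv) f) =
      eval (Fin.cons (qv * v m) (m.removeNth v)) f := by
  induction m using Fin.induction generalizing v with
  | zero =>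
    simp only [Fin.val_zero, List.range_zero, List.foldl_nil, tauOp, AlgHom.toLinearMap_apply]
    rw [← coe_aeval_eq_eval, ← coe_aeval_eq_eval, RingHom.coe_coe, RingHom.coe_coe,
      ← AlgHom.comp_apply, comp_aeval]
    congr 2
    funext j
    cases j using Fin.cases <;> simp [Fin.tail]
  | succ k ih =>
    rw [Fin.val_succ, List.range_succ, List.foldl_append, List.foldl_cons, List.foldl_nil,
      LinearMap.comp_apply, eval_sOp]
    rw [Fin.val_castSucc] at ih
    rw [ih]
    congr 2
    funext j
    cases j using Fin.cases <;> simp [Fin.removeNth, adjSwap_succAbove]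

theorem eval_omegaOp (f : P (N + 1)) : eval v (omegaOp (N + 1) qv f) = eval (rot qv v) f := by
  have hfold := eval_foldl_sOp (v := v) (qv := qv) (Fin.last N) f
  rwa [Fin.removeNth_last] at hfold

theorem omegaOp_one : omegaOp (N + 1) qv 1 = 1 :=
  MvPolynomial.funext fun v => by rw [eval_omegaOp, map_one, map_one]

end Evaluation

section Realization

variable {N : ℕ} {qv tv : K} {T : ℕ → P (N + 1) →ₗ[K] P (N + 1)} {v : Fin (N + 1) → K}

theorem ne_of_injective (hv : Function.Injective v) (k : Fin N) : v k.castSucc ≠ v k.succ :=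
  hv.ne Fin.castSucc_lt_succ.ne

namespace IsDL

theorem apply_apply (hT : IsDL (N + 1) tv T) (k : Fin N) (f : P (N + 1)) :
    T k (T k f) = (tv - 1) • T k f + tv • f := by
  refine ext_of_eval_injective fun v hv => ?_
  have hne := ne_of_injective hv k
  have hcomp : (v ∘ adjSwap k) ∘ adjSwap k = v := by ext; simp
  rw [map_add, smul_eval, smul_eval, hT.eval_apply k hne, hT.eval_apply k (by simpa using hne.symm),
    hT.eval_apply k hne, hcomp]
  simp only [Function.comp_apply, Equiv.swap_apply_left, Equiv.swap_apply_right]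
  have h₁ := sub_ne_zero.mpr hne
  rw [← neg_sub (v k.castSucc)]
  field_simp
  ring

theorem apply_comm (hT : IsDL (N + 1) tv T) {k l : Fin N} (hkl : (k : ℕ) + 1 < l)
    (f : P (N + 1)) : T k (T l f) = T l (T k f) := by
  refine ext_of_eval_injective fun v hv => ?_
  have hk := ne_of_injective hv k
  have hl := ne_of_injective hv l
  obtain ⟨h₁, h₂⟩ := adjSwap_apply_of_far (Or.inl hkl)
  obtain ⟨h₃, h₄⟩ := adjSwap_apply_of_far (Or.inr hkl)
  have hcomp : (v ∘ adjSwap k) ∘ adjSwap l = (v ∘ adjSwap l) ∘ adjSwap k :=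
    congrArg (fun s : Equiv.Perm _ => v ∘ s) (adjSwap_commute hkl)
  rw [hT.eval_apply k hk, hT.eval_apply l hl, hT.eval_apply l hl, hT.eval_apply k hk,
    hT.eval_apply l (by simpa [h₁, h₂] using hl), hT.eval_apply k (by simpa [h₃, h₄] using hk),
    hcomp]
  simp only [Function.comp_apply, h₁, h₂, h₃, h₄]
  ring

theorem braid (hT : IsDL (N + 1) tv T) {k l : Fin N} (hkl : (l : ℕ) = k + 1) (f : P (N + 1)) :
    T k (T l (T k f)) = T l (T k (T l f)) := by
  refine ext_of_eval_injective fun v hv => ?_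
  have hb : l.castSucc = k.succ := Fin.ext hkl
  have hk : adjSwap k l.succ = l.succ :=
    Equiv.swap_apply_of_ne_of_ne (by simp [Fin.ext_iff]; omega) (by simp [Fin.ext_iff]; omega)
  have hl : adjSwap l k.castSucc = k.castSucc :=
    Equiv.swap_apply_of_ne_of_ne (by simp [Fin.ext_iff]; omega) (by simp [Fin.ext_iff]; omega)
  have hinj : ∀ {w : Fin (N + 1) → K}, Function.Injective w → ∀ m : Fin N,
      Function.Injective (w ∘ adjSwap m) := fun hw m => hw.comp (adjSwap m).injective
  have heval : ∀ m : Fin N, ∀ {w}, Function.Injective w → ∀ g : P (N + 1), eval w (T m g) = _ :=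
    fun m _ hw g => hT.eval_apply m (ne_of_injective hw m) g
  have hkk : (v ∘ adjSwap k) ∘ adjSwap k = v := by ext; simp
  have hll : (v ∘ adjSwap l) ∘ adjSwap l = v := by ext; simp
  have hbraid : ((v ∘ adjSwap k) ∘ adjSwap l) ∘ adjSwap k =
      ((v ∘ adjSwap l) ∘ adjSwap k) ∘ adjSwap l :=
    congrArg (fun s : Equiv.Perm _ => v ∘ s) (adjSwap_braid hkl)
  have hvk := hinj hv k
  have hvl := hinj hv l
  rw [heval k hv, heval l hvk, heval k (hinj hvk l), heval k hvk, heval l hv, heval k hvl,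
    heval k hv, heval l hv, heval k hvl, heval l (hinj hvl k), heval l hvl, heval k hv,
    heval l hvk, heval l hv, hkk, hll, hbraid]
  have hbs : adjSwap l k.succ = l.succ := hb ▸ Equiv.swap_apply_left _ _
  have hcs : adjSwap l l.succ = k.succ := hb ▸ Equiv.swap_apply_right _ _
  simp only [Function.comp_apply, hb, hk, hl, hbs, hcs, Equiv.swap_apply_left,
    Equiv.swap_apply_right]
  have d₁ := sub_ne_zero.mpr (ne_of_injective hv k)
  have d₂ := sub_ne_zero.mpr (hb ▸ ne_of_injective hv l)
  have d₃ : v k.castSucc - v l.succ ≠ 0 :=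
    sub_ne_zero.mpr (hv.ne (by simp [Fin.ext_iff]; omega))
  rw [← neg_sub (v k.castSucc) (v k.succ), ← neg_sub (v k.succ) (v l.succ)]
  field_simp
  ring

theorem omegaOp_apply (hT : IsDL (N + 1) tv T) {k l : Fin N} (hkl : (l : ℕ) = k + 1)
    (f : P (N + 1)) : omegaOp (N + 1) qv (T l f) = T k (omegaOp (N + 1) qv f) := by
  refine ext_of_eval_injective fun v hv => ?_
  have hb : l.castSucc = k.succ := Fin.ext hkl
  have hne := ne_of_injective hv k
  rw [eval_omegaOp, hT.eval_apply k hne, hT.eval_apply l (by simpa [hb] using hne),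
    rot_comp_adjSwap hkl, eval_omegaOp, eval_omegaOp]
  simp only [hb, rot_succ]

theorem omegaOp_omegaOp_apply {T : ℕ → P (N + 2) →ₗ[K] P (N + 2)} (hT : IsDL (N + 2) tv T)
    (hq : qv ≠ 0) (f : P (N + 2)) :
    omegaOp (N + 2) qv (omegaOp (N + 2) qv (T 0 f)) =
      T N (omegaOp (N + 2) qv (omegaOp (N + 2) qv f)) := by
  refine ext_of_eval_injective fun v hv => ?_
  have hne := ne_of_injective hv (Fin.last N)
  have h₀ : rot qv (rot qv v) (Fin.castSucc 0) = qv * v (Fin.last N).castSucc := rfl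
  have h₁ : rot qv (rot qv v) (Fin.succ 0) = qv * v (Fin.last N).succ := rfl
  have hfirst := hT.eval_apply 0 (v := rot qv (rot qv v))
    (by rw [h₀, h₁]; exact fun h => hne (mul_left_cancel₀ hq h)) f
  have hlast := hT.eval_apply (Fin.last N) hne (omegaOp (N + 2) qv (omegaOp (N + 2) qv f))
  simp only [eval_omegaOp, h₀, h₁, rot_rot_comp_adjSwap, Fin.val_zero, Fin.val_last]
    at hfirst hlast ⊢
  rw [hfirst, hlast, mul_left_comm tv, mul_left_comm (1 - tv), ← mul_sub, ← mul_sub,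
    mul_div_mul_left _ _ hq, mul_div_mul_left _ _ hq]

theorem apply_X_mul_of_ne (hT : IsDL (N + 1) tv T) {k : Fin N} {j : Fin (N + 1)}
    (hj : j ≠ k.castSucc) (hj' : j ≠ k.succ) (f : P (N + 1)) : T k (X j * f) = X j * T k f := by
  refine ext_of_eval_injective fun v hv => ?_
  have hne := ne_of_injective hv k
  rw [map_mul (eval v), hT.eval_apply k hne, hT.eval_apply k hne]
  simp only [map_mul, eval_X, Function.comp_apply, Equiv.swap_apply_of_ne_of_ne hj hj']
  ring

theorem apply_X_mul (hT : IsDL (N + 1) tv T) (k : Fin N) (f : P (N + 1)) :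
    T k (X k.castSucc * f) = X k.succ * (T k f + (1 - tv) • f) := by
  refine ext_of_eval_injective fun v hv => ?_
  have hne := ne_of_injective hv k
  rw [map_mul (eval v), map_add, smul_eval, hT.eval_apply k hne, hT.eval_apply k hne]
  simp only [map_mul, eval_X, Function.comp_apply, Equiv.swap_apply_left]
  have d := sub_ne_zero.mpr hne
  field_simp
  ring

theorem apply_one (hT : IsDL (N + 1) tv T) (k : Fin N) : T k 1 = tv • 1 := by
  refine ext_of_eval_injective fun v hv => ?_
  have d := sub_ne_zero.mpr (ne_of_injective hv k)
  rw [hT.eval_apply k (ne_of_injective hv k), smul_eval, map_one, map_one]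
  field_simp
  ring

theorem eval_apply_of_eq_mul (hT : IsDL (N + 1) tv T) (k : Fin N)
    (hne : v k.castSucc ≠ v k.succ) (hv : v k.succ = tv * v k.castSucc) (f : P (N + 1)) :
    eval v (T k f) = tv * eval v f := by
  have d := sub_ne_zero.mpr hne
  have hcoeff : (1 - tv) * v k.succ = tv * (v k.castSucc - v k.succ) := by
    linear_combination hv
  rw [hT.eval_apply k hne, ← hv, sub_self, zero_div, zero_mul, zero_add, hcoeff,
    mul_div_cancel_right₀ _ d]

end IsDL

theorem omegaOp_X_zero_mul (f : P (N + 1)) :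
    omegaOp (N + 1) qv (X 0 * f) = qv • (X (Fin.last N) * omegaOp (N + 1) qv f) :=
  MvPolynomial.funext fun v => by simp [eval_omegaOp, mul_assoc]

theorem omegaOp_X_succ_mul (k : Fin N) (f : P (N + 1)) :
    omegaOp (N + 1) qv (X k.succ * f) = X k.castSucc * omegaOp (N + 1) qv f :=
  MvPolynomial.funext fun v => by simp [eval_omegaOp]

/-- Multiplication by the `j`-th variable, indexed by natural numbers `j ≤ N`. -/
noncomputable def mulX (N j : ℕ) : Module.End K (P (N + 1)) :=
  LinearMap.mulLeft K (X (Fin.ofNat (N + 1) j))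

theorem mulX_apply (j : Fin (N + 1)) (f : P (N + 1)) : mulX N j f = X j * f := by
  rw [mulX, LinearMap.mulLeft_apply, Fin.ofNat_val_eq_self]

theorem IsDL.isDoubleAffineHecke (hT : IsDL (N + 1) tv T) (hq : qv ≠ 0) (ht : tv ≠ 0) :
    IsDoubleAffineHecke N qv tv T (mulX N) (omegaOp (N + 1) qv) where
  tv_ne_zero := ht
  sq k hk := LinearMap.ext (hT.apply_apply ⟨k, hk⟩)
  commute k l hkl hl := LinearMap.ext (hT.apply_comm (k := ⟨k, by omega⟩) (l := ⟨l, hl⟩) hkl)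
  braid k hk := LinearMap.ext (hT.braid (k := ⟨k, by omega⟩) (l := ⟨k + 1, hk⟩) rfl)
  semiconj_rot k hk :=
    LinearMap.ext (hT.omegaOp_apply (k := ⟨k, by omega⟩) (l := ⟨k + 1, hk⟩) rfl)
  semiconj_rot_rot hN := by
    obtain ⟨M, rfl⟩ := Nat.exists_eq_add_one.mpr hN
    exact LinearMap.ext (hT.omegaOp_omegaOp_apply hq)
  commute_x k hk j hj hjk hjk' := LinearMap.ext fun f => by
    lift k to Fin N using hk
    lift j to Fin (N + 1) using Nat.lt_succ_of_le hj
    have hcomm := hT.apply_X_mul_of_ne (k := k) (j := j) (by simpa [Fin.ext_iff])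
      (by simpa [Fin.ext_iff]) f
    simpa only [Module.End.mul_apply, mulX_apply] using hcomm.symm
  mul_x k hk := LinearMap.ext fun f => by
    lift k to Fin N using hk
    change T k (mulX N (k.castSucc : ℕ) f) = tv • mulX N (k.succ : ℕ) (heckeInv tv (T k) f)
    rw [mulX_apply, mulX_apply, hT.apply_X_mul, ← mul_smul_comm, heckeInv]
    simp only [LinearMap.add_apply, LinearMap.sub_apply, LinearMap.smul_apply,
      Module.End.one_apply, smul_add, smul_sub, smul_inv_smul₀ ht, sub_smul, one_smul]
    exact congrArg _ (add_comm _ _)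
  semiconj_rot_x_zero := LinearMap.ext fun f => by
    change omegaOp (N + 1) qv (mulX N (0 : Fin (N + 1)) f) =
      qv • mulX N (Fin.last N) (omegaOp (N + 1) qv f)
    rw [mulX_apply, mulX_apply, omegaOp_X_zero_mul]
  semiconj_rot_x_succ k hk := LinearMap.ext fun f => by
    lift k to Fin N using hk
    change omegaOp (N + 1) qv (mulX N k.succ f) = mulX N k.castSucc (omegaOp (N + 1) qv f)
    rw [mulX_apply, mulX_apply, omegaOp_X_succ_mul]

theorem yop_eq_cherednik (i : Fin (N + 1)) :
    Yop (N + 1) qv tv T i = cherednik N tv T (omegaOp (N + 1) qv) i := by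
  have hprod : ∀ (U : ℕ → Module.End K (P (N + 1))) (l : List ℕ),
      l.foldr (fun k acc => U k ∘ₗ acc) LinearMap.id = (l.map U).prod := by
    intro U l
    induction l with
    | nil => rfl
    | cons k l ih => rw [List.foldr_cons, ih, List.map_cons, List.prod_cons]; rfl
  rw [Yop, hprod, hprod, cherednik, ascProd, ascProd, ← List.range_eq_range', mul_assoc]
  rfl

end Realization

section Coefficients

variable {N : ℕ}

/-- The coefficient of `x^ν`, as a linear functional indexed by plain exponent vectors. -/
noncomputable def coeffAt {n : ℕ} (ν : Fin n → ℕ) : P n →ₗ[K] K :=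
  lcoeff K (Finsupp.equivFunOnFinite.symm ν)

theorem coeffAt_apply {n : ℕ} (ν : Fin n → ℕ) (f : P n) :
    coeffAt ν f = coeff (Finsupp.equivFunOnFinite.symm ν) f := rfl

theorem coeffAt_coe {n : ℕ} (m : Fin n →₀ ℕ) (f : P n) : coeffAt m f = coeff m f := by
  rw [coeffAt_apply, Finsupp.equivFunOnFinite_symm_coe]

theorem coeffAt_update_X_mul {n : ℕ} (ν : Fin n → ℕ) (i : Fin n) (a : ℕ) (f : P n) :
    coeffAt (Function.update ν i (a + 1)) (X i * f) = coeffAt (Function.update ν i a) f := by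
  rw [coeffAt_apply, coeffAt_apply, coeff_X_mul', if_pos (by simp)]
  congr 1
  ext x
  obtain rfl | hx := eq_or_ne x i <;> simp [*]

theorem coeffAt_X_mul_of_eq_zero {n : ℕ} {ν : Fin n → ℕ} {i : Fin n} (h : ν i = 0) (f : P n) :
    coeffAt ν (X i * f) = 0 := by
  rw [coeffAt_apply, coeff_X_mul', if_neg (by simp [h])]

theorem coeffAt_sOp (k : Fin N) (ν : Fin (N + 1) → ℕ) (f : P (N + 1)) :
    coeffAt ν (sOp (N + 1) k f) = coeffAt (ν ∘ adjSwap k) f := by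
  have hk : (k : ℕ) + 1 < N + 1 := by omega
  have hν : Finsupp.equivFunOnFinite.symm ν =
      (Finsupp.equivFunOnFinite.symm (ν ∘ adjSwap k)).mapDomain (adjSwap k) := by
    ext x
    simp [Finsupp.mapDomain_equiv_apply]
  rw [coeffAt_apply, coeffAt_apply, hν]
  simp only [sOp, hk, ↓reduceDIte, AlgHom.toLinearMap_apply]
  exact coeff_rename_mapDomain _ (adjSwap k).injective _ _

/-- The exponent vector `ν` with its entries at `k` and `k + 1` replaced by `a` and `b`. -/
def replacePair (k : Fin N) (ν : Fin (N + 1) → ℕ) (a b : ℕ) : Fin (N + 1) → ℕ :=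
  Function.update (Function.update ν k.castSucc a) k.succ b

section ReplacePair

variable (k : Fin N) (ν : Fin (N + 1) → ℕ) (a b : ℕ)

@[simp]
theorem replacePair_castSucc : replacePair k ν a b k.castSucc = a := by
  simp [replacePair, Fin.castSucc_lt_succ.ne]

@[simp]
theorem replacePair_succ : replacePair k ν a b k.succ = b := by
  simp [replacePair]

variable {k} in
theorem replacePair_of_ne {x : Fin (N + 1)} (h : x ≠ k.castSucc) (h' : x ≠ k.succ) :
    replacePair k ν a b x = ν x := by
  simp [replacePair, h, h']

theorem replacePair_self : replacePair k ν (ν k.castSucc) (ν k.succ) = ν := by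
  simp [replacePair]

theorem replacePair_comp_adjSwap : replacePair k ν a b ∘ adjSwap k = replacePair k ν b a := by
  funext x
  obtain rfl | h := eq_or_ne x k.castSucc
  · simp
  obtain rfl | h' := eq_or_ne x k.succ
  · simp
  simp [Equiv.swap_apply_of_ne_of_ne h h', replacePair_of_ne ν _ _ h h']

theorem replacePair_swap :
    replacePair k ν (ν k.succ) (ν k.castSucc) = ν ∘ adjSwap k := by
  conv_rhs => rw [← replacePair_self k ν, replacePair_comp_adjSwap]

theorem coeffAt_replacePair_X_castSucc_mul (f : P (N + 1)) :
    coeffAt (replacePair k ν (a + 1) b) (X k.castSucc * f) = coeffAt (replacePair k ν a b) f := by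
  simp only [replacePair, Function.update_comm Fin.castSucc_lt_succ.ne, coeffAt_update_X_mul]

theorem coeffAt_replacePair_X_succ_mul (f : P (N + 1)) :
    coeffAt (replacePair k ν a (b + 1)) (X k.succ * f) = coeffAt (replacePair k ν a b) f :=
  coeffAt_update_X_mul _ _ _ f

theorem coeffAt_replacePair_sOp (f : P (N + 1)) :
    coeffAt (replacePair k ν a b) (sOp (N + 1) k f) = coeffAt (replacePair k ν b a) f := by
  rw [coeffAt_sOp, replacePair_comp_adjSwap]

end ReplacePair

/-- The action of `T_k` on coefficients: `F a b` and `G a b` are the coefficients of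
`x_k^a x_{k+1}^b` in `f` and in `T_k f`. The rules compare coefficients in
`(x_k - x_{k+1}) T_k f = (t x_k - x_{k+1}) s_k f + (1 - t) x_{k+1} f`. -/
structure DemazureLusztigRecurrence (tv : K) (F G : ℕ → ℕ → K) : Prop where
  succ_succ : ∀ a b, G a (b + 1) - G (a + 1) b =
    tv * F (b + 1) a - F b (a + 1) + (1 - tv) * F (a + 1) b
  zero_left : ∀ b, G 0 b = F b 0 - (1 - tv) * F 0 b
  zero_right : ∀ a, G a 0 = tv * F 0 a

namespace DemazureLusztigRecurrence

variable {tv : K} {F G : ℕ → ℕ → K} {d M : ℕ}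

theorem apply_of_le_left (h : DemazureLusztigRecurrence tv F G)
    (hF : ∀ a b, a + b = d → M ≤ max a b → F a b = 0) {a b : ℕ} (hab : a + b = d)
    (hM : M ≤ a + 1) : G a b = tv * F b a := by
  induction b generalizing a with
  | zero => exact h.zero_right a
  | succ b ih =>
    have hrec := h.succ_succ a b
    have hnext := ih (a := a + 1) (by omega) (by omega)
    rw [hF b (a + 1) (by omega) (by omega)] at hrec hnext
    rw [hF (a + 1) b (by omega) (by omega)] at hrec
    linear_combination hrec + hnext

theorem apply_of_le_right (h : DemazureLusztigRecurrence tv F G)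
    (hF : ∀ a b, a + b = d → M ≤ max a b → F a b = 0) {a b : ℕ} (hab : a + b = d)
    (hM : M ≤ b) : G a b = 0 := by
  induction a generalizing b with
  | zero =>
    rw [h.zero_left, hF b 0 (by omega) (by omega), hF 0 b (by omega) (by omega)]
    ring
  | succ a ih =>
    have hrec := h.succ_succ a b
    rw [ih (b := b + 1) (by omega) (by omega), hF (b + 1) a (by omega) (by omega),
      hF b (a + 1) (by omega) (by omega), hF (a + 1) b (by omega) (by omega)] at hrec
    linear_combination -hrec

end DemazureLusztigRecurrence

variable {tv : K} {T : ℕ → P (N + 1) →ₗ[K] P (N + 1)}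

theorem IsDL.demazureLusztigRecurrence (hT : IsDL (N + 1) tv T) (k : Fin N)
    (ν : Fin (N + 1) → ℕ) (f : P (N + 1)) :
    DemazureLusztigRecurrence tv (fun a b => coeffAt (replacePair k ν a b) f)
      (fun a b => coeffAt (replacePair k ν a b) (T k f)) := by
  have hdef : (X k.castSucc - X k.succ) * T k f = (X k.castSucc - X k.succ) * (C tv * f) +
      (C tv * X k.castSucc - X k.succ) * (sOp (N + 1) k f - f) := hT k (by omega) f
  have hrec : X k.castSucc * T k f - X k.succ * T k f =
      tv • (X k.castSucc * sOp (N + 1) k f) - X k.succ * sOp (N + 1) k f +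
        (1 - tv) • (X k.succ * f) := by
    simp only [smul_eq_C_mul, map_sub, map_one]
    linear_combination hdef
  have hcoeff : ∀ μ : Fin (N + 1) → ℕ, _ := fun μ => congrArg (coeffAt μ) hrec
  simp only [map_sub, map_add, map_smul, smul_eq_mul] at hcoeff
  have hleft : ∀ b (g : P (N + 1)), coeffAt (replacePair k ν 0 b) (X k.castSucc * g) = 0 :=
    fun b => coeffAt_X_mul_of_eq_zero (replacePair_castSucc ..)
  have hright : ∀ a (g : P (N + 1)), coeffAt (replacePair k ν a 0) (X k.succ * g) = 0 :=
    fun a => coeffAt_X_mul_of_eq_zero (replacePair_succ ..)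
  constructor
  · intro a b
    simpa only [coeffAt_replacePair_X_castSucc_mul, coeffAt_replacePair_X_succ_mul,
      coeffAt_replacePair_sOp] using hcoeff (replacePair k ν (a + 1) (b + 1))
  · intro b
    have hzero := hcoeff (replacePair k ν 0 (b + 1))
    simp only [coeffAt_replacePair_X_succ_mul, coeffAt_replacePair_sOp, hleft] at hzero
    linear_combination -hzero
  · intro a
    have hzero := hcoeff (replacePair k ν (a + 1) 0)
    simp only [coeffAt_replacePair_X_castSucc_mul, coeffAt_replacePair_sOp, hright] at hzero
    linear_combination hzero

theorem IsDL.exists_coeffAt_ne_zero (hT : IsDL (N + 1) tv T) (k : Fin N) {ν : Fin (N + 1) → ℕ}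
    {f : P (N + 1)} (h : coeffAt ν (T k f) ≠ 0) :
    ∃ μ, (∀ x, x ≠ k.castSucc → x ≠ k.succ → ν x = μ x) ∧
      ν k.castSucc + ν k.succ = μ k.castSucc + μ k.succ ∧
      max (ν k.castSucc) (ν k.succ) ≤ max (μ k.castSucc) (μ k.succ) ∧ coeffAt μ f ≠ 0 := by
  by_contra! hzero
  have hrec := hT.demazureLusztigRecurrence k ν f
  have hF : ∀ a b, a + b = ν k.castSucc + ν k.succ → max (ν k.castSucc) (ν k.succ) ≤ max a b →
      coeffAt (replacePair k ν a b) f = 0 := fun a b hab hmax =>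
    hzero _ (fun x h h' => (replacePair_of_ne ν a b h h').symm) (by simpa using hab.symm)
      (by simpa using hmax)
  rw [← replacePair_self k ν] at h
  apply h
  rcases le_total (ν k.castSucc) (ν k.succ) with hle | hle
  · exact hrec.apply_of_le_right hF rfl (max_eq_right hle).le
  · rw [hrec.apply_of_le_left hF rfl ((max_eq_left hle).le.trans (Nat.le_succ _)),
      hF _ _ (add_comm _ _) (max_comm _ _).le, mul_zero]

theorem IsDL.coeffAt_comp_adjSwap (hT : IsDL (N + 1) tv T) (k : Fin N) {η : Fin (N + 1) → ℕ}
    {f : P (N + 1)} (hf : ∀ a b, a + b = η k.castSucc + η k.succ → η k.succ < max a b →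
      coeffAt (replacePair k η a b) f = 0) :
    coeffAt (η ∘ adjSwap k) (T k f) = tv * coeffAt η f := by
  have := (hT.demazureLusztigRecurrence k η f).apply_of_le_left (M := η k.succ + 1) hf
    (add_comm (η k.succ) (η k.castSucc)) le_rfl
  rwa [replacePair_swap, replacePair_self] at this

end Coefficients

section Bruhat

variable {n N : ℕ} {ν μ η : Fin n → ℕ}

/-- The total excess over `m` of the entries of `ν`, after the first `p` of them have been raised
by one; the truncated subtraction makes entries below `m` contribute `0`. -/
def excess (p m : ℕ) (ν : Fin n → ℕ) : ℕ :=
  ∑ x : Fin n, (ν x + (if (x : ℕ) < p then 1 else 0) - m)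

/-- A Bruhat-type partial order on compositions: the sums agree and every raised vector
`ν + (1, …, 1, 0, …, 0)` is majorized by `η + (1, …, 1, 0, …, 0)`. It stands in for the order `≼`
of the statement because it is visibly preserved by the affine rotation of exponents. -/
def BruhatLE (ν η : Fin n → ℕ) : Prop :=
  ∑ x, ν x = ∑ x, η x ∧ ∀ p m, excess p m ν ≤ excess p m η

theorem excess_succ (x : Fin n) (m : ℕ) (ν : Fin n → ℕ) :
    excess (x + 1) m ν = excess x m ν + if m ≤ ν x then 1 else 0 := by
  rw [excess, excess, ← Finset.add_sum_erase _ _ (mem_univ x),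
    ← Finset.add_sum_erase (a := x) _ _ (mem_univ x), add_right_comm]
  congr 1
  · split_ifs <;> omega
  · refine Finset.sum_congr rfl fun y hy => ?_
    have hne : (y : ℕ) ≠ x := Fin.val_ne_of_ne (Finset.ne_of_mem_erase hy)
    congr 2
    exact if_congr (by omega) rfl rfl

namespace BruhatLE

theorem refl (ν : Fin n → ℕ) : BruhatLE ν ν := ⟨rfl, fun _ _ => le_rfl⟩

theorem trans (h : BruhatLE ν μ) (h' : BruhatLE μ η) : BruhatLE ν η :=
  ⟨h.1.trans h'.1, fun p m => (h.2 p m).trans (h'.2 p m)⟩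

theorem antisymm (h : BruhatLE ν η) (h' : BruhatLE η ν) : ν = η := by
  have hexcess : ∀ p m, excess p m ν = excess p m η := fun p m => (h.2 p m).antisymm (h'.2 p m)
  have hle : ∀ x m, m ≤ ν x ↔ m ≤ η x := fun x m => by
    have hstep := excess_succ x m ν
    rw [hexcess, hexcess, excess_succ, Nat.add_left_cancel_iff] at hstep
    split_ifs at hstep <;> omega
  exact funext fun x => ((hle x _).mp le_rfl).antisymm ((hle x _).mpr le_rfl)

end BruhatLE

theorem wellFounded_bruhatLT :
    WellFounded fun ν η : Fin n → ℕ => BruhatLE ν η ∧ ν ≠ η := by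
  classical
  let below (η : Fin n → ℕ) : Finset (Fin n → ℕ) :=
    {ν ∈ piAntidiag univ (∑ x, η x) | BruhatLE ν η}
  refine Subrelation.wf (r := fun ν η => #(below ν) < #(below η)) (fun {ν η} h => ?_)
    (measure fun η => #(below η)).wf
  obtain ⟨hle, hne⟩ := h
  refine Finset.card_lt_card ((Finset.ssubset_iff_of_subset fun μ hμ => ?_).mpr ⟨η, ?_, ?_⟩)
  · simp only [below, mem_filter, mem_piAntidiag] at hμ ⊢
    exact ⟨⟨hμ.1.1.trans hle.1, hμ.1.2⟩, hμ.2.trans hle⟩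
  · simp [below, BruhatLE.refl]
  · simp only [below, mem_filter, not_and]
    exact fun _ hle' => hne (hle.antisymm hle')

theorem sum_add_pair_eq {ι M : Type*} [Fintype ι] [AddCommMonoid M] {g h : ι → M}
    {i j : ι} (hij : i ≠ j) (hgh : ∀ x, x ≠ i → x ≠ j → g x = h x) :
    ∑ x, g x + (h i + h j) = ∑ x, h x + (g i + g j) := by
  classical
  have hrest : ∑ x ∈ {i, j}ᶜ, g x = ∑ x ∈ {i, j}ᶜ, h x :=
    Finset.sum_congr rfl fun x hx => by
      simp only [mem_compl, mem_insert, mem_singleton, not_or] at hx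
      exact hgh x hx.1 hx.2
  rw [← Finset.sum_add_sum_compl {i, j} g, ← Finset.sum_add_sum_compl {i, j} h,
    Finset.sum_pair hij, Finset.sum_pair hij, hrest]
  abel

theorem excess_add_pair_eq {ν μ : Fin (N + 1) → ℕ} (k : Fin N)
    (h : ∀ x, x ≠ k.castSucc → x ≠ k.succ → ν x = μ x) (p m : ℕ) :
    excess p m ν + ((μ k.castSucc + (if (k : ℕ) < p then 1 else 0) - m) +
        (μ k.succ + (if (k : ℕ) + 1 < p then 1 else 0) - m)) =
      excess p m μ + ((ν k.castSucc + (if (k : ℕ) < p then 1 else 0) - m) +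
        (ν k.succ + (if (k : ℕ) + 1 < p then 1 else 0) - m)) :=
  sum_add_pair_eq (g := fun x => ν x + (if (x : ℕ) < p then 1 else 0) - m)
    (h := fun x => μ x + (if (x : ℕ) < p then 1 else 0) - m)
    Fin.castSucc_lt_succ.ne fun x hx hx' => by rw [h x hx hx']

theorem comp_adjSwap_of_ne (η : Fin (N + 1) → ℕ) {k : Fin N} (x : Fin (N + 1))
    (h : x ≠ k.castSucc) (h' : x ≠ k.succ) : (η ∘ adjSwap k) x = η x := by
  rw [Function.comp_apply, Equiv.swap_apply_of_ne_of_ne h h']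

namespace BruhatLE

variable {k : Fin N} {ν ν' η : Fin (N + 1) → ℕ}

theorem comp_adjSwap (h : BruhatLE ν η) (hη : η k.castSucc < η k.succ)
    (hν : ∀ x, x ≠ k.castSucc → x ≠ k.succ → ν' x = ν x)
    (hsum : ν' k.castSucc + ν' k.succ = ν k.castSucc + ν k.succ)
    (hmax : max (ν' k.castSucc) (ν' k.succ) ≤ max (ν k.castSucc) (ν k.succ)) :
    BruhatLE ν' (η ∘ adjSwap k) := by
  have hk : k.castSucc ≠ k.succ := Fin.castSucc_lt_succ.ne
  refine ⟨?_, fun p m => ?_⟩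
  · have hν' := sum_add_pair_eq hk hν
    rw [hsum] at hν'
    have hη' : ∑ x, (η ∘ adjSwap k) x = ∑ x, η x := Equiv.sum_comp (adjSwap k) η
    rw [hη', ← h.1]
    omega
  have hpairν := excess_add_pair_eq k hν p m
  have hpairη := excess_add_pair_eq k (comp_adjSwap_of_ne η) p m
  simp only [Function.comp_apply, Equiv.swap_apply_left, Equiv.swap_apply_right] at hpairη
  have hp := h.2 p m
  by_cases hpk : p = k + 1
  · subst hpk
    have hp₀ := h.2 k m
    have hp₂ := h.2 (k + 2) m
    have hν₀ := excess_succ k.castSucc m ν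
    have hν₂ := excess_succ k.succ m ν
    have hη₀ := excess_succ k.castSucc m η
    have hη₂ := excess_succ k.succ m η
    simp only [Fin.val_castSucc, Fin.val_succ, add_assoc, Nat.reduceAdd] at hν₀ hν₂ hη₀ hη₂
    simp only [Nat.lt_succ_self, lt_irrefl, if_true, if_false] at hpairν hpairη
    split_ifs at hν₀ hν₂ hη₀ hη₂ <;> omega
  · have hif : (if (k : ℕ) + 1 < p then 1 else 0) = if (k : ℕ) < p then 1 else 0 :=
      if_congr (by omega) rfl rfl
    rw [hif] at hpairν hpairη
    generalize (if (k : ℕ) < p then 1 else 0) = e at hpairν hpairη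
    omega

theorem not_comp_adjSwap (hη : η k.castSucc < η k.succ) : ¬ BruhatLE (η ∘ adjSwap k) η := by
  intro h
  have hpair := excess_add_pair_eq k (comp_adjSwap_of_ne η) (k + 1) (η k.succ)
  have hle := h.2 (k + 1) (η k.succ)
  simp only [Function.comp_apply, Equiv.swap_apply_left, Equiv.swap_apply_right,
    Nat.lt_succ_self, lt_irrefl, if_true, if_false] at hpair
  omega

theorem max_le (h : BruhatLE ν η) (hν : ∀ x, x ≠ k.castSucc → x ≠ k.succ → ν x = η x) :
    max (ν k.castSucc) (ν k.succ) ≤ max (η k.castSucc) (η k.succ) := by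
  have hpair := excess_add_pair_eq k hν 0 (max (η k.castSucc) (η k.succ))
  have hle := h.2 0 (max (η k.castSucc) (η k.succ))
  simp only [Nat.not_lt_zero, if_false, add_zero] at hpair
  omega

end BruhatLE

/-- The affine rotation `(ν_0, …, ν_N) ↦ (ν_1, …, ν_N, ν_0 + 1)` of exponent vectors, by which
`x_N ω` acts on monomials. -/
def affineRot (ν : Fin (N + 1) → ℕ) : Fin (N + 1) → ℕ := Fin.snoc (Fin.tail ν) (ν 0 + 1)

@[simp]
theorem affineRot_last (ν : Fin (N + 1) → ℕ) : affineRot ν (Fin.last N) = ν 0 + 1 := by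
  simp [affineRot]

@[simp]
theorem affineRot_castSucc (ν : Fin (N + 1) → ℕ) (j : Fin N) :
    affineRot ν j.castSucc = ν j.succ := by
  simp [affineRot, Fin.tail]

theorem affineRot_injective : Function.Injective (affineRot (N := N)) := fun ν μ h =>
  funext <| Fin.cases (by simpa using congrFun h (Fin.last N))
    fun j => by simpa using congrFun h j.castSucc

theorem exists_affineRot_eq {μ : Fin (N + 1) → ℕ} (h : μ (Fin.last N) ≠ 0) :
    ∃ ν, affineRot ν = μ := by
  refine ⟨Fin.cons (μ (Fin.last N) - 1) (Fin.init μ), funext <| Fin.lastCases ?_ fun j => ?_⟩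
  · simpa using Nat.succ_pred_eq_of_ne_zero h
  · simp [Fin.init]

theorem sum_affineRot (ν : Fin (N + 1) → ℕ) : ∑ x, affineRot ν x = ∑ x, ν x + 1 := by
  rw [Fin.sum_univ_castSucc, Fin.sum_univ_succ]
  simp only [affineRot_last, affineRot_castSucc]
  omega

theorem excess_affineRot_of_le {p : ℕ} (hp : p ≤ N) (m : ℕ) (ν : Fin (N + 1) → ℕ) :
    excess p m (affineRot ν) = excess (p + 1) m ν := by
  rw [excess, excess, Fin.sum_univ_castSucc, Fin.sum_univ_succ, add_comm]
  simp [hp.not_gt]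

theorem excess_affineRot_of_lt {p : ℕ} (hp : N < p) (m : ℕ) (ν : Fin (N + 1) → ℕ) :
    excess p (m + 1) (affineRot ν) = excess 1 m ν := by
  have hlt : ∀ j : Fin N, (j : ℕ) < p := fun j => j.2.trans hp
  rw [excess, excess, Fin.sum_univ_castSucc, Fin.sum_univ_succ, add_comm]
  simp [hp, hlt]

theorem excess_zero_right (p : ℕ) (ν : Fin n → ℕ) :
    excess p 0 ν = ∑ x, ν x + ∑ x : Fin n, if (x : ℕ) < p then 1 else 0 :=
  Finset.sum_add_distrib

theorem BruhatLE.affineRot {ν η : Fin (N + 1) → ℕ} (h : BruhatLE ν η) :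
    BruhatLE (affineRot ν) (affineRot η) := by
  refine ⟨by rw [sum_affineRot, sum_affineRot, h.1], fun p m => ?_⟩
  rcases le_or_gt p N with hp | hp
  · simpa only [excess_affineRot_of_le hp] using h.2 (p + 1) m
  cases m with
  | zero => rw [excess_zero_right, excess_zero_right, sum_affineRot, sum_affineRot, h.1]
  | succ m => simpa only [excess_affineRot_of_lt hp] using h.2 1 m

end Bruhat

section AffineRotation

variable {N : ℕ} {qv : K}

theorem eval_monomial_affineRot (v : Fin (N + 1) → K) (ν : Fin (N + 1) → ℕ) (c : K) :
    eval v (monomial (Finsupp.equivFunOnFinite.symm (affineRot ν)) (qv ^ ν 0 * c)) =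
      v (Fin.last N) * eval (rot qv v) (monomial (Finsupp.equivFunOnFinite.symm ν) c) := by
  rw [eval_monomial, eval_monomial, Finsupp.prod_fintype _ _ (by simp),
    Finsupp.prod_fintype _ _ (by simp), Fin.prod_univ_castSucc, Fin.prod_univ_succ]
  simp only [Finsupp.coe_equivFunOnFinite_symm, affineRot_last, affineRot_castSucc, rot_zero,
    rot_succ]
  ring

theorem X_last_mul_omegaOp_monomial (ν : Fin (N + 1) → ℕ) (c : K) :
    X (Fin.last N) * omegaOp (N + 1) qv (monomial (Finsupp.equivFunOnFinite.symm ν) c) =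
      monomial (Finsupp.equivFunOnFinite.symm (affineRot ν)) (qv ^ ν 0 * c) :=
  MvPolynomial.funext fun v => by
    rw [eval_monomial_affineRot, map_mul, eval_X, eval_omegaOp]

theorem coeffAt_affineRot (f : P (N + 1)) (ν : Fin (N + 1) → ℕ) :
    coeffAt (affineRot ν) (X (Fin.last N) * omegaOp (N + 1) qv f) =
      qv ^ ν 0 * coeffAt ν f := by
  classical
  induction f using MvPolynomial.induction_on' with
  | monomial m c =>
    obtain ⟨μ, rfl⟩ := Finsupp.equivFunOnFinite.symm.surjective m
    rw [X_last_mul_omegaOp_monomial, coeffAt_apply, coeffAt_apply, coeff_monomial, coeff_monomial]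
    simp only [EmbeddingLike.apply_eq_iff_eq, affineRot_injective.eq_iff, mul_ite, mul_zero]
    exact ite_congr rfl (fun h => h ▸ rfl) fun _ => rfl
  | add f g hf hg => rw [map_add, mul_add, map_add, map_add, hf, hg, mul_add]

theorem exists_affineRot_of_coeffAt_ne_zero {f : P (N + 1)} {μ : Fin (N + 1) → ℕ}
    (h : coeffAt μ (X (Fin.last N) * omegaOp (N + 1) qv f) ≠ 0) :
    ∃ ν, affineRot ν = μ ∧ coeffAt ν f ≠ 0 := by
  obtain ⟨ν, rfl⟩ := exists_affineRot_eq fun h0 => h (coeffAt_X_mul_of_eq_zero h0 _)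
  exact ⟨ν, rfl, fun h0 => h (by rw [coeffAt_affineRot, h0, mul_zero])⟩

end AffineRotation

section Diagrams

theorem legCo_eq_sum {n : ℕ} (η : Fin n → ℕ) (i : Fin n) :
    legCo n η i = ∑ k, ((if k < i ∧ η i ≤ η k then 1 else 0) +
      (if i < k ∧ η i < η k then 1 else 0)) := by
  rw [legCo, Finset.card_filter, Finset.card_filter, Finset.sum_add_distrib]

theorem leg_eq_sum {n : ℕ} (η : Fin n → ℕ) (i : Fin n) (j : ℕ) :
    leg n η i j = ∑ k, ((if i < k ∧ j ≤ η k ∧ η k ≤ η i then 1 else 0) +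
      (if k < i ∧ j ≤ η k + 1 ∧ η k + 1 ≤ η i then 1 else 0)) := by
  rw [leg, Finset.card_filter, Finset.card_filter, Finset.sum_add_distrib]

variable {N : ℕ} (η : Fin (N + 1) → ℕ)

section AffineRot

theorem legCo_affineRot_castSucc (i : Fin N) :
    legCo (N + 1) (affineRot η) i.castSucc = legCo (N + 1) η i.succ := by
  rw [legCo_eq_sum, legCo_eq_sum, Fin.sum_univ_castSucc, Fin.sum_univ_succ, add_comm]
  congr 1
  · simp [Fin.lt_def, i.2.le]
  · simp only [affineRot_castSucc, Fin.castSucc_lt_castSucc_iff, Fin.succ_lt_succ_iff]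

theorem legCo_affineRot_last :
    legCo (N + 1) (affineRot η) (Fin.last N) = legCo (N + 1) η 0 := by
  rw [legCo_eq_sum, legCo_eq_sum, Fin.sum_univ_castSucc, Fin.sum_univ_succ, add_comm]
  congr 1
  · simp
  · exact Finset.sum_congr rfl fun x _ => by simp [Fin.lt_def, x.2.le]

theorem leg_affineRot_castSucc (i : Fin N) (j : ℕ) :
    leg (N + 1) (affineRot η) i.castSucc j = leg (N + 1) η i.succ j := by
  rw [leg_eq_sum, leg_eq_sum, Fin.sum_univ_castSucc, Fin.sum_univ_succ, add_comm]
  congr 1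
  · simp [Fin.lt_def, i.2.le]
  · simp only [affineRot_castSucc, Fin.castSucc_lt_castSucc_iff, Fin.succ_lt_succ_iff]

theorem leg_affineRot_last (j : ℕ) :
    leg (N + 1) (affineRot η) (Fin.last N) (j + 1) = leg (N + 1) η 0 j := by
  rw [leg_eq_sum, leg_eq_sum, Fin.sum_univ_castSucc, Fin.sum_univ_succ, add_comm]
  congr 1
  · simp
  · exact Finset.sum_congr rfl fun x _ => by simp [Fin.lt_def, x.2.le]

theorem leg_zero_zero_add_legCo : leg (N + 1) η 0 0 + legCo (N + 1) η 0 = N := by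
  have hterm : ∀ x : Fin N, (if η x.succ ≤ η 0 then 1 else 0) +
      (if η 0 < η x.succ then 1 else 0) = 1 := fun x => by
    split_ifs <;> omega
  rw [leg_eq_sum, legCo_eq_sum, ← Finset.sum_add_distrib, Fin.sum_univ_succ]
  simp [hterm]

@[to_additive sum_Icc_one_succ]
theorem prod_Icc_one_succ {M : Type*} [CommMonoid M] (m : ℕ) (f : ℕ → M) :
    ∏ j ∈ Icc 1 (m + 1), f j = f 1 * ∏ j ∈ Icc 1 m, f (j + 1) := by
  induction m with
  | zero => simp
  | succ m ih =>
    rw [Finset.prod_Icc_succ_top (Nat.le_add_left 1 _), ih,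
      Finset.prod_Icc_succ_top (Nat.le_add_left 1 _), mul_assoc]

theorem lTot_affineRot : lTot (N + 1) (affineRot η) = lTot (N + 1) η + leg (N + 1) η 0 0 := by
  rw [lTot, lTot, Fin.sum_univ_castSucc, Fin.sum_univ_succ]
  simp only [affineRot_last, affineRot_castSucc, leg_affineRot_castSucc]
  rw [sum_Icc_one_succ, leg_affineRot_last η 0]
  simp only [leg_affineRot_last]
  omega

theorem dP_affineRot : dP (N + 1) (affineRot η) =
    dP (N + 1) η * (1 - q ^ (η 0 + 1) * t ^ (leg (N + 1) η 0 0 + 1)) := by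
  rw [dP, dP, Fin.prod_univ_castSucc, Fin.prod_univ_succ]
  simp only [affineRot_last, affineRot_castSucc, leg_affineRot_castSucc]
  rw [prod_Icc_one_succ, leg_affineRot_last η 0]
  simp only [leg_affineRot_last, Nat.add_sub_cancel, Nat.add_sub_add_right]
  ring

theorem eP_affineRot : eP (N + 1) (affineRot η) =
    eP (N + 1) η * (1 - q ^ (η 0 + 1) * t ^ (leg (N + 1) η 0 0 + 1)) := by
  have hlegCo : N + 1 - legCo (N + 1) η 0 = leg (N + 1) η 0 0 + 1 := by
    have := leg_zero_zero_add_legCo η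
    omega
  rw [eP, eP, Fin.prod_univ_castSucc, Fin.prod_univ_succ]
  simp only [affineRot_last, affineRot_castSucc, legCo_affineRot_castSucc, legCo_affineRot_last,
    hlegCo, Finset.prod_Icc_succ_top (Nat.le_add_left 1 (η 0)), Nat.add_sub_cancel]
  ring

end AffineRot

section AdjSwap

theorem adjSwap_lt_adjSwap_iff (k : Fin N) (x y : Fin (N + 1)) :
    (x = k.castSucc ∧ y = k.succ) ∨ (x = k.succ ∧ y = k.castSucc) ∨
      ((adjSwap k x < adjSwap k y ↔ x < y) ∧ (adjSwap k y < adjSwap k x ↔ y < x)) := by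
  have hval : ∀ z : Fin (N + 1), (adjSwap k z : ℕ) =
      if (z : ℕ) = k then (k : ℕ) + 1 else if (z : ℕ) = k + 1 then (k : ℕ) else z := fun z => by
    simp only [Equiv.swap_apply_def, Fin.ext_iff, Fin.val_castSucc, Fin.val_succ]
    split_ifs <;> rfl
  simp only [Fin.ext_iff, Fin.lt_def, hval, Fin.val_castSucc, Fin.val_succ]
  split_ifs <;> omega

variable {η} {k : Fin N} (hη : η k.castSucc < η k.succ)
include hη

theorem legCo_comp_adjSwap (x : Fin (N + 1)) :
    legCo (N + 1) (η ∘ adjSwap k) (adjSwap k x) = legCo (N + 1) η x := by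
  have hk : k.castSucc < k.succ := Fin.castSucc_lt_succ
  rw [legCo_eq_sum, legCo_eq_sum, ← Equiv.sum_comp (adjSwap k)]
  refine Finset.sum_congr rfl fun y _ => ?_
  simp only [Function.comp_apply, Equiv.swap_apply_self]
  rcases adjSwap_lt_adjSwap_iff k x y with ⟨rfl, rfl⟩ | ⟨rfl, rfl⟩ | ⟨hlt, hgt⟩
  · simp [hk, hk.not_gt, hη, hη.le]
  · simp [hk, hk.not_gt, hη.not_gt, hη.not_ge]
  · simp only [hlt, hgt]

theorem leg_eq_leg_comp_adjSwap_add (x : Fin (N + 1)) (y : ℕ) :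
    leg (N + 1) η x y = leg (N + 1) (η ∘ adjSwap k) (adjSwap k x) y +
      if x = k.succ ∧ y = η k.castSucc + 1 then 1 else 0 := by
  have hk : k.castSucc < k.succ := Fin.castSucc_lt_succ
  have hextra : (if x = k.succ ∧ y = η k.castSucc + 1 then 1 else 0) =
      ∑ z, if z = k.castSucc then (if x = k.succ ∧ y = η k.castSucc + 1 then 1 else 0) else 0 := by
    simp
  rw [hextra, leg_eq_sum, leg_eq_sum]
  refine Eq.trans ?_ (congrArg (· + _) (Equiv.sum_comp (adjSwap k) _))
  rw [← Finset.sum_add_distrib]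
  refine Finset.sum_congr rfl fun z _ => ?_
  simp only [Function.comp_apply, Equiv.swap_apply_self]
  rcases adjSwap_lt_adjSwap_iff k x z with ⟨rfl, rfl⟩ | ⟨rfl, rfl⟩ | ⟨hlt, hgt⟩
  · simp [hk.ne, hη.not_ge, hη.not_gt]
  · simp only [Equiv.swap_apply_left, Equiv.swap_apply_right, hk, hk.not_gt, true_and, false_and,
      if_false, if_true]
    split_ifs <;> omega
  · have hzero : ¬ (z = k.castSucc ∧ x = k.succ) := by
      rintro ⟨rfl, rfl⟩
      simp [hk, hk.not_gt] at hlt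
    simp only [hlt, hgt]
    rw [left_eq_add, ← ite_and, if_neg fun h => hzero ⟨h.1, h.2.1⟩]

theorem legCo_castSucc_eq_add_leg :
    legCo (N + 1) η k.castSucc =
      legCo (N + 1) η k.succ + leg (N + 1) η k.succ (η k.castSucc + 1) := by
  have hcount : legCo (N + 1) η k.castSucc + ∑ z, (if z = k.castSucc then 1 else 0) =
      legCo (N + 1) η k.succ + leg (N + 1) η k.succ (η k.castSucc + 1) +
        ∑ z, (if z = k.succ then 1 else 0) := by
    rw [legCo_eq_sum, legCo_eq_sum, leg_eq_sum, ← Finset.sum_add_distrib,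
      ← Finset.sum_add_distrib, ← Finset.sum_add_distrib]
    refine Finset.sum_congr rfl fun z _ => ?_
    rcases lt_trichotomy z k.castSucc with hz | rfl | hz
    · have hz' : z < k.succ := hz.trans Fin.castSucc_lt_succ
      simp only [hz, hz', hz.ne, hz'.ne, hz.not_gt, hz'.not_gt, true_and, false_and, if_false]
      split_ifs <;> omega
    · simp [hη.not_ge, Nat.succ_le_of_lt hη, Fin.castSucc_lt_succ.ne,
        Fin.castSucc_lt_succ.not_gt]
    · rcases (Fin.castSucc_lt_iff_succ_le.mp hz).eq_or_lt with rfl | hz'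
      · simp [hη, Fin.castSucc_lt_succ.ne', Fin.castSucc_lt_succ.not_gt]
      · simp only [hz, hz', hz.ne', hz'.ne', hz.not_gt, hz'.not_gt, true_and, false_and, if_false]
        split_ifs <;> omega
  simpa using hcount

theorem eP_comp_adjSwap : eP (N + 1) (η ∘ adjSwap k) = eP (N + 1) η := by
  rw [eP, ← Equiv.prod_comp (adjSwap k)]
  simp only [legCo_comp_adjSwap hη, Function.comp_apply, Equiv.swap_apply_self]
  rfl

theorem lTot_eq_lTot_comp_adjSwap_add_one :
    lTot (N + 1) η = lTot (N + 1) (η ∘ adjSwap k) + 1 := by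
  rw [lTot, lTot, ← Equiv.sum_comp (adjSwap k) fun x => ∑ y ∈ Icc 1 ((η ∘ adjSwap k) x), _]
  simp only [leg_eq_leg_comp_adjSwap_add hη, Finset.sum_add_distrib, Function.comp_apply,
    Equiv.swap_apply_self, ite_and]
  rw [Nat.add_left_cancel_iff]
  simpa [Finset.sum_ite_irrel] using hη

theorem dP_mul_eq_dP_comp_adjSwap_mul {r : ℕ}
    (hr : leg (N + 1) η k.succ (η k.castSucc + 1) = r) :
    dP (N + 1) η * (1 - q ^ (η k.succ - η k.castSucc) * t ^ r) =
      dP (N + 1) (η ∘ adjSwap k) * (1 - q ^ (η k.succ - η k.castSucc) * t ^ (r + 1)) := by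
  have hleg := leg_eq_leg_comp_adjSwap_add hη
  let node : Σ _ : Fin (N + 1), ℕ := ⟨k.succ, η k.castSucc + 1⟩
  have hnode : node ∈ univ.sigma fun x => Icc 1 (η x) := by
    simp [node, Nat.succ_le_of_lt hη]
  have hother : ∀ s ∈ (univ.sigma fun x => Icc 1 (η x)).erase node,
      leg (N + 1) (η ∘ adjSwap k) (adjSwap k s.1) s.2 = leg (N + 1) η s.1 s.2 := by
    rintro ⟨x, y⟩ hs
    have hne : ¬ (x = k.succ ∧ y = η k.castSucc + 1) := by
      rintro ⟨rfl, rfl⟩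
      exact Finset.ne_of_mem_erase hs rfl
    rw [hleg, if_neg hne, add_zero]
  have hthis := hleg k.succ (η k.castSucc + 1)
  rw [if_pos ⟨rfl, rfl⟩, hr] at hthis
  have harm : η k.succ - (η k.castSucc + 1) + 1 = η k.succ - η k.castSucc := by omega
  rw [dP, dP, ← Equiv.prod_comp (adjSwap k) fun x => ∏ y ∈ Icc 1 ((η ∘ adjSwap k) x), _]
  simp only [Function.comp_apply, Equiv.swap_apply_self]
  rw [Finset.prod_sigma', Finset.prod_sigma', ← Finset.mul_prod_erase _ _ hnode,
    ← Finset.mul_prod_erase _ _ hnode,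
    Finset.prod_congr (s₂ := (univ.sigma fun x => Icc 1 (η x)).erase node) rfl
      fun s hs => by rw [← hother s hs]]
  simp only [node, harm, hr, ← hthis]
  ring

end AdjSwap

end Diagrams

section SpectralVectors

theorem q_ne_zero : q ≠ 0 := by
  rw [q, Ne, FaithfulSMul.algebraMap_eq_zero_iff]
  exact X_ne_zero 0

theorem t_ne_zero : t ≠ 0 := by
  rw [t, Ne, FaithfulSMul.algebraMap_eq_zero_iff]
  exact X_ne_zero 1

theorem q_pow_mul_t_pow_inj {a b c d : ℕ} (h : q ^ a * t ^ b = q ^ c * t ^ d) :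
    a = c ∧ b = d := by
  rw [q, t, ← map_pow, ← map_pow, ← map_pow, ← map_pow, ← map_mul, ← map_mul] at h
  have hX := IsFractionRing.injective (MvPolynomial (Fin 2) ℚ) K h
  rw [X_pow_eq_monomial, X_pow_eq_monomial, X_pow_eq_monomial, X_pow_eq_monomial,
    monomial_mul, monomial_mul, mul_one, monomial_left_inj one_ne_zero] at hX
  exact ⟨by simpa using DFunLike.congr_fun hX 0, by simpa using DFunLike.congr_fun hX 1⟩

theorem one_sub_q_pow_mul_t_pow_ne_zero {a : ℕ} (ha : a ≠ 0) (b : ℕ) :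
    1 - q ^ a * t ^ b ≠ 0 := fun h =>
  ha (q_pow_mul_t_pow_inj (b := b) (c := 0) (d := 0) (by linear_combination -h)).1

/-- The joint eigenvalues `q^{η_i} t^{-l'_η(i)}` of the Cherednik operators `Y_i` on `E_η`. -/
noncomputable def spectralVector {n : ℕ} (η : Fin n → ℕ) (i : Fin n) : K :=
  q ^ η i / t ^ legCo n η i

theorem spectralVector_injective {n : ℕ} :
    Function.Injective (spectralVector : (Fin n → ℕ) → Fin n → K) := fun η ν h => funext fun i => by
  have hi := congrFun h i
  rw [spectralVector, spectralVector,
    div_eq_div_iff (pow_ne_zero _ t_ne_zero) (pow_ne_zero _ t_ne_zero)] at hi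
  exact (q_pow_mul_t_pow_inj hi).1

theorem spectralVector_zero {n : ℕ} (i : Fin n) : spectralVector 0 i = (t ^ (i : ℕ))⁻¹ := by
  have hlegCo : legCo n 0 i = i := by simp [legCo, Finset.filter_gt_eq_Iio]
  rw [spectralVector, hlegCo, Pi.zero_apply, pow_zero, one_div]

variable {N : ℕ} {η : Fin (N + 1) → ℕ}

theorem spectralVector_affineRot_castSucc (j : Fin N) :
    spectralVector (affineRot η) j.castSucc = spectralVector η j.succ := by
  rw [spectralVector, affineRot_castSucc, legCo_affineRot_castSucc, spectralVector]

theorem spectralVector_affineRot_last :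
    spectralVector (affineRot η) (Fin.last N) = q * spectralVector η 0 := by
  rw [spectralVector, affineRot_last, legCo_affineRot_last, spectralVector, pow_succ',
    mul_div_assoc]

variable {k : Fin N} (hη : η k.castSucc < η k.succ)
include hη

theorem spectralVector_comp_adjSwap (j : Fin (N + 1)) :
    spectralVector (η ∘ adjSwap k) j = spectralVector η (adjSwap k j) := by
  have hlegCo := legCo_comp_adjSwap hη (adjSwap k j)
  rw [Equiv.swap_apply_self] at hlegCo
  rw [spectralVector, hlegCo, Function.comp_apply, spectralVector]

theorem spectralVector_succ :
    spectralVector η k.succ = spectralVector η k.castSucc *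
      (q ^ (η k.succ - η k.castSucc) * t ^ leg (N + 1) η k.succ (η k.castSucc + 1)) := by
  have ht := t_ne_zero
  rw [spectralVector, spectralVector, legCo_castSucc_eq_add_leg hη, pow_add,
    ← pow_mul_pow_sub q hη.le]
  field_simp

end SpectralVectors

section CompositionInduction

variable {N : ℕ} {motive : (Fin (N + 1) → ℕ) → Prop}

theorem composition_induction (zero : motive 0)
    (affineRot : ∀ η, motive η → motive (affineRot η))
    (swap : ∀ (k : Fin N) η, η k.castSucc < η k.succ → motive η → motive (η ∘ adjSwap k))
    (η : Fin (N + 1) → ℕ) : motive η := by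
  induction hd : ∑ x, η x generalizing η with
  | zero =>
    obtain rfl : η = 0 := funext fun x => Finset.sum_eq_zero_iff.mp hd x (mem_univ x)
    exact zero
  | succ d ih =>
    have hpos : ∀ i, ∀ η : Fin (N + 1) → ℕ, ∑ x, η x = d + 1 → η i ≠ 0 → motive η := by
      intro i
      induction i using Fin.reverseInduction with
      | last =>
        intro η hη hlast
        obtain ⟨ν, rfl⟩ := exists_affineRot_eq hlast
        exact affineRot ν (ih ν (Nat.succ_injective ((sum_affineRot ν).symm.trans hη)))
      | cast k ihk =>
        intro η hη hk
        by_cases hk' : η k.succ = 0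
        · have hswap := swap k (η ∘ adjSwap k) (by simpa [hk'] using Nat.pos_of_ne_zero hk)
            (ihk _ ((Equiv.sum_comp (adjSwap k) η).trans hη) (by simpa using hk))
          rwa [Function.comp_assoc, ← Equiv.coe_trans, Equiv.swap_swap, Equiv.coe_refl,
            Function.comp_id] at hswap
        · exact ihk η hη hk'
    obtain ⟨i, -, hi⟩ := Finset.exists_ne_zero_of_sum_ne_zero (hd.trans_ne d.succ_ne_zero)
    exact hpos i η hd hi

end CompositionInduction

section Macdonald

variable {N : ℕ} {T : ℕ → P (N + 1) →ₗ[K] P (N + 1)} {η : Fin (N + 1) → ℕ} {F : P (N + 1)}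

/-- Evaluation at `(1, t, …, t^{n-1})`, as a linear functional. -/
noncomputable def principalEval (n : ℕ) : Module.Dual K (P n) :=
  (aeval fun i : Fin n => t ^ (i : ℕ)).toLinearMap

theorem principalEval_apply {n : ℕ} (f : P n) :
    principalEval n f = eval (fun i : Fin n => t ^ (i : ℕ)) f := rfl

theorem principalEval_demazureLusztig (hT : IsDL (N + 1) t T) {k : ℕ} (hk : k < N)
    (f : P (N + 1)) : principalEval (N + 1) (T k f) = t * principalEval (N + 1) f := by
  rw [principalEval_apply, principalEval_apply]
  refine hT.eval_apply_of_eq_mul ⟨k, hk⟩ (fun h => ?_) (pow_succ' t k) f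
  have := (q_pow_mul_t_pow_inj (a := 0) (c := 0) (congrArg (q ^ 0 * ·) h)).2
  simp at this

/-- A non-symmetric Macdonald polynomial for `η` whose triangularity is expressed through the
Bruhat order `BruhatLE` instead of `prec`. -/
structure IsBruhatMacdonald (T : ℕ → P (N + 1) →ₗ[K] P (N + 1)) (η : Fin (N + 1) → ℕ)
    (F : P (N + 1)) : Prop where
  coeffAt_self : coeffAt η F = 1
  bruhatLE : ∀ ν, coeffAt ν F ≠ 0 → BruhatLE ν η
  yop_apply : ∀ i, Yop (N + 1) q t T i F = spectralVector η i • F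

/-- The evaluation formula `F(1, t, …, t^{n-1}) d_η = t^{l(η)} e_η`. -/
def HasPrincipalValue {n : ℕ} (η : Fin n → ℕ) (F : P n) : Prop :=
  principalEval n F * dP n η = t ^ lTot n η * eP n η

section Zero

theorem equivFunOnFinite_symm_zero {n : ℕ} :
    Finsupp.equivFunOnFinite.symm (0 : Fin n → ℕ) = 0 := by
  ext
  rfl

theorem isBruhatMacdonald_zero (hT : IsDL (N + 1) t T) : IsBruhatMacdonald T 0 1 where
  coeffAt_self := by
    rw [coeffAt_apply, equivFunOnFinite_symm_zero, coeff_zero_one]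
  bruhatLE ν hν := by
    rw [coeffAt_apply, coeff_one, Ne, ite_eq_right_iff, Classical.not_imp,
      ← equivFunOnFinite_symm_zero, EmbeddingLike.apply_eq_iff_eq] at hν
    exact hν.1 ▸ BruhatLE.refl 0
  yop_apply i := by
    rw [yop_eq_cherednik, cherednik_apply_of_trivial t_ne_zero
      (fun k hk => hT.apply_one ⟨k, hk⟩) omegaOp_one (Nat.le_of_lt_succ i.2), spectralVector_zero]

theorem hasPrincipalValue_zero {n : ℕ} : HasPrincipalValue (0 : Fin n → ℕ) 1 := by
  simp [HasPrincipalValue, principalEval_apply, dP, eP, lTot]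

end Zero

section AffineRot

/-- The affine raising operator `q^{-η_1} x_n ω`, which sends `E_η` to `E_{affineRot η}`. -/
noncomputable def raise (η : Fin (N + 1) → ℕ) (F : P (N + 1)) : P (N + 1) :=
  (q ^ η 0)⁻¹ • (X (Fin.last N) * omegaOp (N + 1) q F)

theorem IsBruhatMacdonald.raise (hT : IsDL (N + 1) t T) (hF : IsBruhatMacdonald T η F) :
    IsBruhatMacdonald T (affineRot η) (raise η F) where
  coeffAt_self := by
    rw [Stmt10.raise, map_smul, coeffAt_affineRot, hF.coeffAt_self, mul_one, smul_eq_mul,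
      inv_mul_cancel₀ (pow_ne_zero _ q_ne_zero)]
  bruhatLE ν hν := by
    rw [Stmt10.raise, map_smul, smul_ne_zero_iff] at hν
    obtain ⟨μ, rfl, hμ⟩ := exists_affineRot_of_coeffAt_ne_zero hν.2
    exact (hF.bruhatLE μ hμ).affineRot
  yop_apply i := by
    have hecke := hT.isDoubleAffineHecke q_ne_zero t_ne_zero
    have hY := hF.yop_apply
    simp only [yop_eq_cherednik] at hY ⊢
    rw [Stmt10.raise, map_smul, smul_comm, ← mulX_apply]
    congr 1
    cases i using Fin.lastCases with
    | last =>
      rw [spectralVector_affineRot_last]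
      exact hecke.cherednik_last_apply_raise (hY 0)
    | cast j =>
      rw [spectralVector_affineRot_castSucc]
      exact hecke.cherednik_apply_raise j.2 (hY j.succ)

theorem principalEval_omegaOp (hT : IsDL (N + 1) t T) (hF : IsBruhatMacdonald T η F) :
    principalEval (N + 1) (omegaOp (N + 1) q F) =
      spectralVector η 0 * principalEval (N + 1) F := by
  rw [← apply_cherednik_zero_of_trivial t_ne_zero
    (fun k hk => principalEval_demazureLusztig hT (k := k) hk) F]
  have hY := hF.yop_apply 0
  rw [yop_eq_cherednik, Fin.val_zero] at hY
  rw [hY, map_smul, smul_eq_mul]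

theorem HasPrincipalValue.raise (hT : IsDL (N + 1) t T) (hF : IsBruhatMacdonald T η F)
    (h : HasPrincipalValue η F) : HasPrincipalValue (affineRot η) (raise η F) := by
  have hq : q ^ η 0 ≠ 0 := pow_ne_zero _ q_ne_zero
  have ht : t ^ legCo (N + 1) η 0 ≠ 0 := pow_ne_zero _ t_ne_zero
  have hleg : t ^ N = t ^ leg (N + 1) η 0 0 * t ^ legCo (N + 1) η 0 := by
    rw [← pow_add, leg_zero_zero_add_legCo]
  have hval : principalEval (N + 1) (Stmt10.raise η F) =
      t ^ leg (N + 1) η 0 0 * principalEval (N + 1) F := by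
    have hX : principalEval (N + 1) (X (Fin.last N) * omegaOp (N + 1) q F) =
        t ^ N * principalEval (N + 1) (omegaOp (N + 1) q F) := by
      simp [principalEval_apply]
    rw [Stmt10.raise, map_smul, hX, principalEval_omegaOp hT hF, spectralVector, hleg, smul_eq_mul]
    field_simp
  rw [HasPrincipalValue] at h ⊢
  rw [hval, dP_affineRot, eP_affineRot, lTot_affineRot, pow_add]
  linear_combination t ^ leg (N + 1) η 0 0 *
    (1 - q ^ (η 0 + 1) * t ^ (leg (N + 1) η 0 0 + 1)) * h

end AffineRot

section Intertwiner

variable {k : Fin N}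

/-- The constant `(1 - t) / (1 - z)`, where `z = q^{η_{k+1} - η_k} t^r` is the ratio of the
eigenvalues of `Y_{k+1}` and `Y_k` on `E_η`. -/
noncomputable def intertwinerCoeff (η : Fin (N + 1) → ℕ) (k : Fin N) : K :=
  (1 - t) / (1 - q ^ (η k.succ - η k.castSucc) * t ^ leg (N + 1) η k.succ (η k.castSucc + 1))

theorem intertwinerCoeff_mul (hη : η k.castSucc < η k.succ) :
    intertwinerCoeff η k *
      (1 - q ^ (η k.succ - η k.castSucc) * t ^ leg (N + 1) η k.succ (η k.castSucc + 1)) = 1 - t :=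
  div_mul_cancel₀ _ (one_sub_q_pow_mul_t_pow_ne_zero (Nat.sub_ne_zero_of_lt hη) _)

/-- The normalized intertwiner, which sends `E_η` to `E_{s_k η}` when `η_k < η_{k+1}`. -/
noncomputable def intertwine (T : ℕ → P (N + 1) →ₗ[K] P (N + 1)) (η : Fin (N + 1) → ℕ) (k : Fin N)
    (F : P (N + 1)) : P (N + 1) :=
  t⁻¹ • (T k F + intertwinerCoeff η k • F)

namespace IsBruhatMacdonald

theorem coeffAt_intertwine (hT : IsDL (N + 1) t T) (hF : IsBruhatMacdonald T η F)
    (hη : η k.castSucc < η k.succ) : coeffAt (η ∘ adjSwap k) (intertwine T η k F) = 1 := by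
  have hzero : coeffAt (η ∘ adjSwap k) F = 0 :=
    not_not.mp (mt (hF.bruhatLE _) (BruhatLE.not_comp_adjSwap hη))
  have hT_coeff : coeffAt (η ∘ adjSwap k) (T k F) = t * coeffAt η F := by
    refine hT.coeffAt_comp_adjSwap k fun a b _ hmax => not_not.mp (mt (hF.bruhatLE _) fun hle => ?_)
    have := hle.max_le fun x h h' => replacePair_of_ne η a b h h'
    rw [replacePair_castSucc, replacePair_succ, max_eq_right hη.le] at this
    exact this.not_gt hmax
  rw [intertwine, map_smul, map_add, map_smul, hzero, hT_coeff, hF.coeffAt_self, smul_zero,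
    add_zero, mul_one, smul_eq_mul, inv_mul_cancel₀ t_ne_zero]

theorem bruhatLE_of_coeffAt_intertwine_ne_zero (hT : IsDL (N + 1) t T)
    (hF : IsBruhatMacdonald T η F) (hη : η k.castSucc < η k.succ) {ν : Fin (N + 1) → ℕ}
    (hν : coeffAt ν (intertwine T η k F) ≠ 0) : BruhatLE ν (η ∘ adjSwap k) := by
  by_cases hνF : coeffAt ν F = 0
  · rw [intertwine, map_smul, map_add, map_smul, hνF, smul_zero, add_zero, smul_ne_zero_iff] at hν
    obtain ⟨μ, hμν, hsum, hmax, hμ⟩ := hT.exists_coeffAt_ne_zero k hν.2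
    exact (hF.bruhatLE μ hμ).comp_adjSwap hη hμν hsum hmax
  · exact (hF.bruhatLE ν hνF).comp_adjSwap hη (fun _ _ _ => rfl) rfl le_rfl

theorem yop_apply_intertwine (hT : IsDL (N + 1) t T) (hF : IsBruhatMacdonald T η F)
    (hη : η k.castSucc < η k.succ) (j : Fin (N + 1)) :
    Yop (N + 1) q t T j (intertwine T η k F) =
      spectralVector (η ∘ adjSwap k) j • intertwine T η k F := by
  let χ : ℕ → K := fun i => spectralVector η (Fin.ofNat (N + 1) i)
  have hχ : ∀ i : Fin (N + 1), χ i = spectralVector η i := fun i => by simp [χ]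
  have hswap : χ (Equiv.swap (k : ℕ) (k + 1) j) = spectralVector (η ∘ adjSwap k) j := by
    rw [spectralVector_comp_adjSwap hη, ← hχ]
    exact congrArg χ (Fin.val_injective.swap_apply k.castSucc k.succ j)
  have hratio : intertwinerCoeff η k * (χ k - χ (k + 1)) = (1 - t) * χ k := by
    rw [show χ k = _ from hχ k.castSucc, show χ (k + 1) = _ from hχ k.succ, spectralVector_succ hη]
    linear_combination spectralVector η k.castSucc * intertwinerCoeff_mul hη
  have hY : ∀ i ≤ N, cherednik N t T (omegaOp (N + 1) q) i F = χ i • F := fun i hi => by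
    have := hF.yop_apply ⟨i, Nat.lt_succ_of_le hi⟩
    rwa [yop_eq_cherednik, ← hχ] at this
  rw [yop_eq_cherednik, intertwine, map_smul, smul_comm, ← hswap,
    (hT.isDoubleAffineHecke q_ne_zero t_ne_zero).cherednik_apply_intertwine hY k.2 hratio
      (Nat.le_of_lt_succ j.2)]

theorem intertwine (hT : IsDL (N + 1) t T) (hF : IsBruhatMacdonald T η F)
    (hη : η k.castSucc < η k.succ) :
    IsBruhatMacdonald T (η ∘ adjSwap k) (intertwine T η k F) where
  coeffAt_self := hF.coeffAt_intertwine hT hη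
  bruhatLE _ := hF.bruhatLE_of_coeffAt_intertwine_ne_zero hT hη
  yop_apply := hF.yop_apply_intertwine hT hη

end IsBruhatMacdonald

theorem HasPrincipalValue.intertwine (hT : IsDL (N + 1) t T) (hη : η k.castSucc < η k.succ)
    (h : HasPrincipalValue η F) : HasPrincipalValue (η ∘ adjSwap k) (intertwine T η k F) := by
  have hc := intertwinerCoeff_mul hη
  have hdP := dP_mul_eq_dP_comp_adjSwap_mul hη rfl
  have hz := one_sub_q_pow_mul_t_pow_ne_zero (Nat.sub_ne_zero_of_lt hη)
    (leg (N + 1) η k.succ (η k.castSucc + 1))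
  rw [HasPrincipalValue] at h ⊢
  rw [lTot_eq_lTot_comp_adjSwap_add_one hη] at h
  rw [Stmt10.intertwine, map_smul, map_add, map_smul, principalEval_demazureLusztig hT k.2,
    eP_comp_adjSwap hη, smul_eq_mul, smul_eq_mul]
  refine mul_left_cancel₀ (mul_ne_zero t_ne_zero hz) ?_
  rw [mul_comm t, mul_assoc, mul_assoc, mul_assoc, mul_inv_cancel_left₀ t_ne_zero]
  linear_combination principalEval (N + 1) F * dP (N + 1) (η ∘ adjSwap k) * hc -
    principalEval (N + 1) F * hdP + (1 - q ^ (η k.succ - η k.castSucc) *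
      t ^ leg (N + 1) η k.succ (η k.castSucc + 1)) * h

end Intertwiner

theorem exists_isBruhatMacdonald_hasPrincipalValue (hT : IsDL (N + 1) t T)
    (η : Fin (N + 1) → ℕ) : ∃ F, IsBruhatMacdonald T η F ∧ HasPrincipalValue η F := by
  induction η using composition_induction with
  | zero => exact ⟨1, isBruhatMacdonald_zero hT, hasPrincipalValue_zero⟩
  | affineRot η ih =>
    obtain ⟨F, hF, hval⟩ := ih
    exact ⟨raise η F, hF.raise hT, hval.raise hT hF⟩
  | swap k η hη ih =>
    obtain ⟨F, hF, hval⟩ := ih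
    exact ⟨intertwine T η k F, hF.intertwine hT hη, hval.intertwine hT hη⟩

end Macdonald

section Uniqueness

theorem span_range_eq_top_of_bruhat_triangular {n : ℕ} {F : (Fin n → ℕ) → P n}
    (hself : ∀ η, coeffAt η (F η) = 1) (hle : ∀ η ν, coeffAt ν (F η) ≠ 0 → BruhatLE ν η) :
    Submodule.span K (Set.range F) = ⊤ := by
  have hspan : ∀ f : P n, (∀ ν : Fin n → ℕ, coeffAt ν f ≠ 0 →
      monomial (Finsupp.equivFunOnFinite.symm ν) 1 ∈ Submodule.span K (Set.range F)) →
      f ∈ Submodule.span K (Set.range F) := fun f hf => by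
    rw [← f.support_sum_monomial_coeff]
    refine Submodule.sum_mem _ fun m hm => ?_
    rw [← mul_one (coeff m f), ← smul_eq_mul, ← smul_monomial]
    refine Submodule.smul_mem _ _ ?_
    simpa using hf m (by simpa [coeffAt_coe] using hm)
  have hmonomial : ∀ η : Fin n → ℕ,
      monomial (Finsupp.equivFunOnFinite.symm η) 1 ∈ Submodule.span K (Set.range F) := fun η => by
    induction η using wellFounded_bruhatLT.induction with
    | _ η ih =>
      have hlower : F η - monomial (Finsupp.equivFunOnFinite.symm η) 1 ∈
          Submodule.span K (Set.range F) := hspan _ fun ν hν => by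
        rw [map_sub, coeffAt_apply ν (monomial _ _), coeff_monomial] at hν
        obtain rfl | hne := eq_or_ne ν η
        · exact absurd (by rw [hself, if_pos rfl, sub_self]) hν
        · rw [if_neg (Finsupp.equivFunOnFinite.symm.injective.ne hne.symm), sub_zero] at hν
          exact ih ν ⟨hle η ν hν, hne⟩
      simpa only [sub_sub_cancel] using
        Submodule.sub_mem _ (Submodule.subset_span (Set.mem_range_self η)) hlower
  exact (Submodule.eq_top_iff').mpr fun f => hspan f fun ν _ => hmonomial ν

variable {N : ℕ} {T : ℕ → P (N + 1) →ₗ[K] P (N + 1)} {η : Fin (N + 1) → ℕ} {E : P (N + 1)}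

theorem hasPrincipalValue_of_yop_apply (hT : IsDL (N + 1) t T)
    (hE : ∀ i, Yop (N + 1) q t T i E = spectralVector η i • E) :
    principalEval (N + 1) E * dP (N + 1) η =
      coeffAt η E * (t ^ lTot (N + 1) η * eP (N + 1) η) := by
  choose F hF hval using exists_isBruhatMacdonald_hasPrincipalValue hT
  have hspan := span_range_eq_top_of_bruhat_triangular (fun η => (hF η).coeffAt_self)
    fun η => (hF η).bruhatLE
  obtain ⟨c, rfl⟩ := Submodule.mem_span_singleton.mp <| mem_span_singleton_of_joint_eigenvector
    (fun ν => (hF ν).yop_apply) spectralVector_injective hE (hspan ▸ Submodule.mem_top)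
  rw [map_smul, map_smul, (hF η).coeffAt_self, smul_eq_mul, smul_eq_mul, mul_one, mul_assoc, hval η]

end Uniqueness

end Stmt10

theorem stmt_10_general (n : ℕ) (η : Fin n → ℕ)
    (T : ℕ → P n →ₗ[K] P n) (hT : IsDL n t T) (E : P n)
    (hE : ∀ i, Yop n q t T i E = (q ^ η i / t ^ legCo n η i) • E) :
    eval (fun i : Fin n => t ^ (i : ℕ)) E * dP n η =
      coeff (Finsupp.equivFunOnFinite.symm η) E * (t ^ lTot n η * eP n η) := by
  obtain - | N := n
  · obtain ⟨c, rfl⟩ := C_surjective (Fin 0) E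
    simp [dP, eP, lTot, Subsingleton.elim (Finsupp.equivFunOnFinite.symm η) 0]
  · exact hasPrincipalValue_of_yop_apply hT hE

theorem stmt_10 (n : ℕ) (η : Fin n → ℕ)
    (T : ℕ → P n →ₗ[K] P n) (hT : IsDL n t T)
    (E : P n) (hE : IsNSMac n q t T η E) :
    eval (fun i : Fin n => t ^ (i : ℕ)) E * dP n η = t ^ lTot n η * eP n η := by
  rw [stmt_10_general n η T hT E hE.2.2, hE.1, one_mul]
end

section
/- Let η∈ℕ^n, p∈ℕ, and let E∈K[x_1,…,x_n] satisfy the defining conditions of the non-symmetric Macdonald polynomial for η (triangular form with leading monomial x^η, and Y_i E = q^{η_i}t^{−l'_η(i)}E for all i). Then (x_1 x_2⋯x_n)^p·E satisfies the defining conditions for the composition η+p := (η_1+p,…,η_n+p); in particular, when both exist and are unique, E_{η+p} = (x_1⋯x_n)^p·E_η. -/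
/- STATEMENT 13: if E satisfies the defining conditions of the non-symmetric Macdonald
polynomial for η, then (x_1⋯x_n)^p·E satisfies them for η+p := (η_1+p,…,η_n+p). -/

open Finset MvPolynomial

namespace Stmt13

/-- leg colength l'_η(i) -/
def legCo (n : ℕ) (η : Fin n → ℕ) (i : Fin n) : ℕ :=
  (univ.filter fun k => k < i ∧ η i ≤ η k).card +
  (univ.filter fun k => i < k ∧ η i < η k).card

/-- leg length l(s) of the node s = (i,j) -/
def leg (n : ℕ) (η : Fin n → ℕ) (i : Fin n) (j : ℕ) : ℕ :=
  (univ.filter fun k => i < k ∧ j ≤ η k ∧ η k ≤ η i).card +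
  (univ.filter fun k => k < i ∧ j ≤ η k + 1 ∧ η k + 1 ≤ η i).card

/-- The field K = ℚ(q,t). -/
abbrev K : Type := FractionRing (MvPolynomial (Fin 2) ℚ)

noncomputable def q : K := algebraMap (MvPolynomial (Fin 2) ℚ) K (X 0)
noncomputable def t : K := algebraMap (MvPolynomial (Fin 2) ℚ) K (X 1)

/-- The polynomial ring K[x_1,…,x_n]. -/
abbrev P (n : ℕ) : Type := MvPolynomial (Fin n) K

/-- the automorphism s_k exchanging x_k and x_{k+1} (0-indexed; identity out of range) -/
noncomputable def sOp (n : ℕ) (k : ℕ) : P n →ₗ[K] P n :=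
  if h : k + 1 < n then
    (rename (Equiv.swap (⟨k, Nat.lt_of_succ_lt h⟩ : Fin n) ⟨k + 1, h⟩)).toLinearMap
  else LinearMap.id

/-- τ_1 : x_1 ↦ qv·x_1 (the first variable is 0-indexed) -/
noncomputable def tauOp (n : ℕ) (qv : K) : P n →ₗ[K] P n :=
  (aeval (fun j : Fin n => if (j : ℕ) = 0 then C qv * X j else X j)).toLinearMap

/-- ω := s_{n−1}⋯s_2 s_1 τ_1 -/
noncomputable def omegaOp (n : ℕ) (qv : K) : P n →ₗ[K] P n :=
  (List.range (n - 1)).foldl (fun acc k => sOp n k ∘ₗ acc) (tauOp n qv)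

/-- The defining property of the Demazure–Lustig operators T_k (0-indexed), for the
parameter value tv: (x_k − x_{k+1})·(T_k f) = (x_k − x_{k+1})·tv·f
+ (tv·x_k − x_{k+1})·(s_k f − f), i.e. T_k f is the polynomial quotient from the usual
definition. -/
def IsDL (n : ℕ) (tv : K) (T : ℕ → P n →ₗ[K] P n) : Prop :=
  ∀ k, ∀ hk : k + 1 < n, ∀ f : P n,
    (X (⟨k, Nat.lt_of_succ_lt hk⟩ : Fin n) - X ⟨k + 1, hk⟩) * T k f =
      (X (⟨k, Nat.lt_of_succ_lt hk⟩ : Fin n) - X ⟨k + 1, hk⟩) * (C tv * f) +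
      (C tv * X (⟨k, Nat.lt_of_succ_lt hk⟩ : Fin n) - X ⟨k + 1, hk⟩) * (sOp n k f - f)

/-- T_k⁻¹ = tv⁻¹ − 1 + tv⁻¹ T_k -/
noncomputable def Tinv (n : ℕ) (tv : K) (T : ℕ → P n →ₗ[K] P n) (k : ℕ) : P n →ₗ[K] P n :=
  tv⁻¹ • LinearMap.id - LinearMap.id + tv⁻¹ • T k

/-- The Cherednik operator Y_i (0-indexed i):
Y_i = tv^{i+1−n}·T_i⋯T_{n−2}·ω·T_0⁻¹⋯T_{i−1}⁻¹. -/
noncomputable def Yop (n : ℕ) (qv tv : K) (T : ℕ → P n →ₗ[K] P n) (i : Fin n) :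
    P n →ₗ[K] P n :=
  (tv ^ (n - 1 - (i : ℕ)))⁻¹ •
    (((List.range' (i : ℕ) (n - 1 - (i : ℕ))).foldr (fun k acc => T k ∘ₗ acc) LinearMap.id) ∘ₗ
      omegaOp n qv ∘ₗ
      ((List.range (i : ℕ)).foldr (fun k acc => Tinv n tv T k ∘ₗ acc) LinearMap.id))

/-- the decreasing rearrangement η⁺ of η -/
noncomputable def sortDesc (n : ℕ) (η : Fin n → ℕ) : Fin n → ℕ :=
  fun i => η (Tuple.sort η i.rev)

/-- dominance order on n-tuples (of equal sum) -/
def domLE (n : ℕ) (ν μ : Fin n → ℕ) : Prop :=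
  (∑ i, ν i = ∑ i, μ i) ∧
  ∀ p : Fin n, ∑ i ∈ univ.filter (· ≤ p), ν i ≤ ∑ i ∈ univ.filter (· ≤ p), μ i

def domLT (n : ℕ) (ν μ : Fin n → ℕ) : Prop := domLE n ν μ ∧ ν ≠ μ

/-- the order ≺ : ν ≺ η iff ν⁺ < η⁺, or ν⁺ = η⁺ and ν < η (dominance order) -/
noncomputable def prec (n : ℕ) (ν η : Fin n → ℕ) : Prop :=
  domLT n (sortDesc n ν) (sortDesc n η) ∨ (sortDesc n ν = sortDesc n η ∧ domLT n ν η)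

/-- E is the non-symmetric Macdonald polynomial for the composition η (with parameters
qv, tv and Demazure–Lustig operators T): it has the triangular form
E = x^η + Σ_{ν≺η} b_{ην} x^ν and satisfies Y_i E = qv^{η_i}·tv^{−l'_η(i)}·E for all i. -/
noncomputable def IsNSMac (n : ℕ) (qv tv : K) (T : ℕ → P n →ₗ[K] P n)
    (η : Fin n → ℕ) (E : P n) : Prop :=
  coeff (Finsupp.equivFunOnFinite.symm η) E = 1 ∧
  (∀ ν : Fin n →₀ ℕ, coeff ν E ≠ 0 → (ν : Fin n → ℕ) = η ∨ prec n (ν : Fin n → ℕ) η) ∧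
  ∀ i : Fin n, Yop n qv tv T i E = (qv ^ η i / tv ^ legCo n η i) • E

end Stmt13

open Stmt13

/-!
Multiplication by a symmetric polynomial commutes with every `s_k`, hence with every Demazure–Lustig
operator `T_k` and its inverse, and `τ_1` multiplies `(x_1⋯x_n)^p` by `q^p`. So each `Y_i` commutes
with multiplication by `(x_1⋯x_n)^p` up to the factor `q^p`, which is exactly the change of
eigenvalue from `η` to `η + p`, since `l'_η` depends only on comparisons between the parts of `η`.
Triangularity is preserved because adding the constant `p` to all exponents is compatible with
sorting and with partial sums.
-/

namespace Stmt13

section Exponents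

variable {n : ℕ}

theorem legCo_add_const (η : Fin n → ℕ) (p : ℕ) (i : Fin n) :
    legCo n (fun j => η j + p) i = legCo n η i := by
  simp only [legCo, add_le_add_iff_right, add_lt_add_iff_right]

theorem sortDesc_add_const (η : Fin n → ℕ) (p : ℕ) :
    sortDesc n (fun i => η i + p) = fun i => sortDesc n η i + p := by
  have monotone_shift : Monotone ((fun i => η i + p) ∘ Tuple.sort η) :=
    (Tuple.monotone_sort η).add_const p
  have sorted_eq := Tuple.comp_sort_eq_comp_iff_monotone.2 monotone_shift
  exact funext fun i => (congrFun sorted_eq i.rev).symm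

theorem add_const_inj {ι M : Type*} [Add M] [IsRightCancelAdd M] {ν μ : ι → M} {p : M} :
    (fun i => ν i + p) = (fun i => μ i + p) ↔ ν = μ := by
  simp only [funext_iff, add_left_inj]

theorem domLE_add_const_iff {ν μ : Fin n → ℕ} {p : ℕ} :
    domLE n (fun i => ν i + p) (fun i => μ i + p) ↔ domLE n ν μ := by
  simp only [domLE, sum_add_distrib, add_left_inj, add_le_add_iff_right]

theorem domLT_add_const_iff {ν μ : Fin n → ℕ} {p : ℕ} :
    domLT n (fun i => ν i + p) (fun i => μ i + p) ↔ domLT n ν μ := by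
  simp only [domLT, domLE_add_const_iff, ne_eq, add_const_inj]

theorem prec_add_const_iff {ν μ : Fin n → ℕ} {p : ℕ} :
    prec n (fun i => ν i + p) (fun i => μ i + p) ↔ prec n ν μ := by
  simp only [prec, sortDesc_add_const, domLT_add_const_iff, add_const_inj]

end Exponents

section Monomials

variable {σ R : Type*} [Fintype σ] [CommSemiring R]

theorem prod_univ_X_pow_eq_monomial (p : ℕ) :
    (∏ i : σ, X i : MvPolynomial σ R) ^ p =
      monomial (Finsupp.equivFunOnFinite.symm fun _ => p) 1 := by
  simp [monomial_eq, Finsupp.prod_fintype, prod_pow]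

theorem isSymmetric_prod_X : (∏ i : σ, X i : MvPolynomial σ R).IsSymmetric := fun e => by
  simpa only [map_prod, rename_X] using Equiv.prod_comp e (X : σ → MvPolynomial σ R)

theorem coeff_prod_X_pow_mul (p : ℕ) (ν : σ → ℕ) (f : MvPolynomial σ R) :
    coeff (Finsupp.equivFunOnFinite.symm fun i => ν i + p) ((∏ i : σ, X i) ^ p * f) =
      coeff (Finsupp.equivFunOnFinite.symm ν) f := by
  have exponent_eq : Finsupp.equivFunOnFinite.symm (fun i => ν i + p) =
      Finsupp.equivFunOnFinite.symm (fun _ => p) + Finsupp.equivFunOnFinite.symm ν :=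
    Finsupp.ext fun i => add_comm (ν i) p
  rw [prod_univ_X_pow_eq_monomial, exponent_eq, coeff_monomial_mul, one_mul]

theorem exists_eq_add_const_of_coeff_prod_X_pow_mul_ne_zero {p : ℕ} {ν : σ →₀ ℕ}
    {f : MvPolynomial σ R} (hν : coeff ν ((∏ i : σ, X i) ^ p * f) ≠ 0) :
    ∃ κ : σ →₀ ℕ, coeff κ f ≠ 0 ∧ ⇑ν = fun i => κ i + p := by
  rw [prod_univ_X_pow_eq_monomial, coeff_monomial_mul', one_mul] at hν
  obtain ⟨hle, hcoeff⟩ := ite_ne_right_iff.1 hν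
  exact ⟨_, hcoeff, funext fun i => (Nat.sub_add_cancel (hle i)).symm⟩

end Monomials

section Operators

variable {n : ℕ} {qv tv c : K} {T : ℕ → P n →ₗ[K] P n} {g : P n}

theorem commute_sOp_mulLeft (hg : g.IsSymmetric) (k : ℕ) :
    Commute (sOp n k) (LinearMap.mulLeft K g) := by
  unfold sOp
  split_ifs with hk
  · refine LinearMap.ext fun f => ?_
    simp only [Module.End.mul_apply, LinearMap.mulLeft_apply, AlgHom.toLinearMap_apply, map_mul,
      hg _]
  · exact Commute.one_left _

theorem IsDL.commute_mulLeft (hT : IsDL n tv T) (hg : g.IsSymmetric) {k : ℕ} (hk : k + 1 < n) :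
    Commute (T k) (LinearMap.mulLeft K g) := by
  refine LinearMap.ext fun f => ?_
  have sub_ne : (X ⟨k, Nat.lt_of_succ_lt hk⟩ - X ⟨k + 1, hk⟩ : P n) ≠ 0 :=
    sub_ne_zero.2 fun h => by simpa using X_injective h
  have sOp_mul : sOp n k (g * f) = g * sOp n k f :=
    LinearMap.congr_fun (commute_sOp_mulLeft hg k) f
  have T_mul := hT k hk (g * f)
  rw [sOp_mul] at T_mul
  change T k (g * f) = g * T k f
  refine mul_left_cancel₀ sub_ne ?_
  linear_combination T_mul - g * hT k hk f

theorem IsDL.commute_Tinv_mulLeft (hT : IsDL n tv T) (hg : g.IsSymmetric) {k : ℕ}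
    (hk : k + 1 < n) : Commute (Tinv n tv T k) (LinearMap.mulLeft K g) := by
  have commute_id : Commute LinearMap.id (LinearMap.mulLeft K g) := Commute.one_left _
  have commute_sub := Commute.sub_left (R := Module.End K (P n))
    (commute_id.smul_left tv⁻¹) commute_id
  exact commute_sub.add_left ((hT.commute_mulLeft hg hk).smul_left tv⁻¹)

theorem commute_foldr_comp {ι R M : Type*} [Semiring R] [AddCommMonoid M] [Module R M]
    {S : ι → Module.End R M} {A : Module.End R M} {l : List ι}
    (hS : ∀ k ∈ l, Commute (S k) A) :
    Commute (l.foldr (fun k acc => S k ∘ₗ acc) LinearMap.id) A :=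
  List.foldrRecOn l _ (motive := (Commute · A)) (Commute.one_left A)
    fun _ ih k hk => (hS k hk).mul_left ih

theorem semiconjBy_tauOp_mulLeft (hτ : tauOp n qv g = c • g) :
    SemiconjBy (tauOp n qv) (LinearMap.mulLeft K g) (c • LinearMap.mulLeft K g) := by
  refine LinearMap.ext fun f => ?_
  have tauOp_mul : tauOp n qv (g * f) = tauOp n qv g * tauOp n qv f := map_mul (aeval _) g f
  change tauOp n qv (g * f) = c • (g * tauOp n qv f)
  rw [tauOp_mul, hτ, smul_mul_assoc]

theorem semiconjBy_omegaOp_mulLeft (hg : g.IsSymmetric) (hτ : tauOp n qv g = c • g) :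
    SemiconjBy (omegaOp n qv) (LinearMap.mulLeft K g) (c • LinearMap.mulLeft K g) :=
  List.foldlRecOn _ _
    (motive := (SemiconjBy · (LinearMap.mulLeft K g) (c • LinearMap.mulLeft K g)))
    (semiconjBy_tauOp_mulLeft hτ)
    fun _ ih k _ => SemiconjBy.mul_left ((commute_sOp_mulLeft hg k).smul_right c) ih

theorem IsDL.semiconjBy_Yop_mulLeft (hT : IsDL n tv T) (hg : g.IsSymmetric)
    (hτ : tauOp n qv g = c • g) (i : Fin n) :
    SemiconjBy (Yop n qv tv T i) (LinearMap.mulLeft K g) (c • LinearMap.mulLeft K g) := by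
  have commute_T : Commute
      ((List.range' i (n - 1 - i)).foldr (fun k acc => T k ∘ₗ acc) LinearMap.id)
      (LinearMap.mulLeft K g) :=
    commute_foldr_comp fun k hk => hT.commute_mulLeft hg (by grind)
  have commute_Tinv : Commute
      ((List.range i).foldr (fun k acc => Tinv n tv T k ∘ₗ acc) LinearMap.id)
      (LinearMap.mulLeft K g) :=
    commute_foldr_comp fun k hk => hT.commute_Tinv_mulLeft hg (by grind)
  exact SemiconjBy.smul_left (SemiconjBy.mul_left (commute_T.smul_right c)
    (SemiconjBy.mul_left (semiconjBy_omegaOp_mulLeft hg hτ) commute_Tinv)) _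

theorem tauOp_prod_X_pow [NeZero n] (qv : K) (p : ℕ) :
    tauOp n qv ((∏ i, X i) ^ p) = qv ^ p • (∏ i, X i) ^ p := by
  obtain ⟨m, rfl⟩ := Nat.exists_eq_succ_of_ne_zero (NeZero.ne n)
  simp [tauOp, Fin.prod_univ_succ, smul_eq_C_mul, mul_pow, mul_assoc]

theorem IsDL.Yop_prod_X_pow_mul (hT : IsDL n tv T) (qv : K) (p : ℕ) (i : Fin n) (f : P n) :
    Yop n qv tv T i ((∏ j, X j) ^ p * f) = qv ^ p • ((∏ j, X j) ^ p * Yop n qv tv T i f) :=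
  haveI : NeZero n := i.neZero
  have hsymm : ((∏ j, X j : P n) ^ p).IsSymmetric :=
    (symmetricSubalgebra (Fin n) K).pow_mem isSymmetric_prod_X p
  LinearMap.congr_fun (hT.semiconjBy_Yop_mulLeft hsymm (tauOp_prod_X_pow qv p) i).eq f

end Operators

theorem t_ne_zero : t ≠ 0 :=
  (map_ne_zero_iff _ (IsFractionRing.injective _ K)).2 (X_ne_zero 1)

end Stmt13

theorem stmt_13_general {n : ℕ} (p : ℕ) {η : Fin n → ℕ} {qv : K} {tv : Kˣ}
    {T : ℕ → P n →ₗ[K] P n} (hT : IsDL n tv T) {E : P n} (hE : IsNSMac n qv tv T η E) :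
    IsNSMac n qv tv T (fun i => η i + p) ((∏ i : Fin n, X i) ^ p * E) := by
  obtain ⟨leading, triangular, eigen⟩ := hE
  refine ⟨(coeff_prod_X_pow_mul p η E).trans leading, fun ν hν => ?_, fun i => ?_⟩
  · obtain ⟨κ, hκ, hνκ⟩ := exists_eq_add_const_of_coeff_prod_X_pow_mul_ne_zero hν
    rw [hνκ, add_const_inj, prec_add_const_iff]
    exact triangular κ hκ
  · rw [hT.Yop_prod_X_pow_mul, eigen i, legCo_add_const, mul_smul_comm, smul_smul, pow_add,
      mul_comm (qv ^ η i), mul_div_assoc]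

theorem stmt_13 (n : ℕ) (p : ℕ) (η : Fin n → ℕ)
    (T : ℕ → P n →ₗ[K] P n) (hT : IsDL n t T)
    (E : P n) (hE : IsNSMac n q t T η E) :
    IsNSMac n q t T (fun i => η i + p) ((∏ i : Fin n, X i) ^ p * E) :=
  stmt_13_general p (tv := Units.mk0 t t_ne_zero) hT hE
end

section
/- (q-analogue of the Cauchy double alternant.) In K[x_1,…,x_n,y_1,…,y_n] with K=ℚ(q,t), let U^{−(x)} denote the operator U^- acting on the x-variables, with the y_j treated as scalars. Then U^{−(x)}( ∏_{1≤i<j≤n}(1−x_j y_i)(1−t x_i y_j) ) = ∏_{1≤i<j≤n}(t x_i − x_j) · ∏_{1≤i<j≤n}(t^{−1} y_i − y_j). -/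
/- STATEMENT 16 (q-analogue of the Cauchy double alternant):
U^{−(x)}( ∏_{i<j}(1−x_j y_i)(1−t x_i y_j) ) = ∏_{i<j}(t x_i − x_j) · ∏_{i<j}(t⁻¹ y_i − y_j),
where U⁻ acts on the x-variables with the y-variables treated as scalars. -/

set_option synthInstance.maxHeartbeats 1000000
set_option maxHeartbeats 1000000

open Finset MvPolynomial

namespace Stmt16

/-- The field K = ℚ(q,t). -/
abbrev K : Type := FractionRing (MvPolynomial (Fin 2) ℚ)

noncomputable def q : K := algebraMap (MvPolynomial (Fin 2) ℚ) K (X 0)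
noncomputable def t : K := algebraMap (MvPolynomial (Fin 2) ℚ) K (X 1)

/-- The coefficient ring K[y_1,…,y_n]. -/
abbrev Ry (n : ℕ) : Type := MvPolynomial (Fin n) K

/-- The ring K[x_1,…,x_n,y_1,…,y_n], viewed as polynomials in the x-variables over K[y]. -/
abbrev Pxy (n : ℕ) : Type := MvPolynomial (Fin n) (Ry n)

/-- the automorphism s_k exchanging x_k and x_{k+1}, fixing the y-variables -/
noncomputable def sOp (n : ℕ) (k : ℕ) : Pxy n →ₗ[Ry n] Pxy n :=
  if h : k + 1 < n then
    (rename (Equiv.swap (⟨k, Nat.lt_of_succ_lt h⟩ : Fin n) ⟨k + 1, h⟩)).toLinearMap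
  else LinearMap.id

/-- The defining property of the Demazure–Lustig operators T_k acting on the x-variables:
(x_k − x_{k+1})·(T_k f) = (x_k − x_{k+1})·t·f + (t·x_k − x_{k+1})·(s_k f − f). -/
def IsDL (n : ℕ) (T : ℕ → Pxy n →ₗ[Ry n] Pxy n) : Prop :=
  ∀ k, ∀ hk : k + 1 < n, ∀ f : Pxy n,
    (X (⟨k, Nat.lt_of_succ_lt hk⟩ : Fin n) - X ⟨k + 1, hk⟩) * T k f =
      (X (⟨k, Nat.lt_of_succ_lt hk⟩ : Fin n) - X ⟨k + 1, hk⟩) * (C (C t) * f) +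
      (C (C t) * X (⟨k, Nat.lt_of_succ_lt hk⟩ : Fin n) - X ⟨k + 1, hk⟩) * (sOp n k f - f)

/-- the adjacent transposition s_k as a permutation (identity out of range, 0-indexed) -/
def sPerm (n : ℕ) (k : ℕ) : Equiv.Perm (Fin n) :=
  if h : k + 1 < n then Equiv.swap ⟨k, Nat.lt_of_succ_lt h⟩ ⟨k + 1, h⟩ else 1

/-- the length l(σ) of a permutation, i.e. its number of inversions -/
def inversions {n : ℕ} (σ : Equiv.Perm (Fin n)) : ℕ :=
  (univ.filter fun p : Fin n × Fin n => p.1 < p.2 ∧ σ p.2 < σ p.1).card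

/-- The defining property of σ ↦ T_σ: T_1 = id and T_{σ·s_k} = T_σ ∘ T_k whenever
l(σ·s_k) = l(σ)+1. -/
def IsTsigma (n : ℕ) (T : ℕ → Pxy n →ₗ[Ry n] Pxy n)
    (Tw : Equiv.Perm (Fin n) → Pxy n →ₗ[Ry n] Pxy n) : Prop :=
  Tw 1 = LinearMap.id ∧
  ∀ σ : Equiv.Perm (Fin n), ∀ k, k + 1 < n →
    inversions (σ * sPerm n k) = inversions σ + 1 →
    Tw (σ * sPerm n k) = Tw σ ∘ₗ T k

/-- U⁻ := Σ_σ (−t)^{−l(σ)} T_σ (acting on the x-variables) -/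
noncomputable def Uminus (n : ℕ) (Tw : Equiv.Perm (Fin n) → Pxy n →ₗ[Ry n] Pxy n) :
    Pxy n →ₗ[Ry n] Pxy n :=
  ∑ σ : Equiv.Perm (Fin n), (C (((-t) ^ inversions σ)⁻¹) : Ry n) • Tw σ

end Stmt16

open Stmt16

/-!
Over the fraction field of `R[x]`, each `T_σ` becomes a combination `∑ τ, a_τ τ` of permutations,
and `σ` is the only permutation of length at least `l(σ)` that occurs in it, with coefficient the
product of `(t x_{σ j} - x_{σ i}) / (x_{σ j} - x_{σ i})` over the inversions `i < j` of `σ`. As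
`T_k` multiplies `s_k`-invariant polynomials such as `s_k f + f` by `t`, one has `U⁻ s_k = -U⁻`;
since distinct permutations are linearly independent (Dedekind), the coefficients of `U⁻` are
therefore `sgn(τ) c` for a single `c`. The coefficient of the longest permutation `w₀` comes from
`T_{w₀}` alone, so `U⁻ = t^{-N} ∏_{i<j} (t x_i - x_j) / (x_i - x_j) · ∑ τ, sgn(τ) τ`, where
`N = n(n-1)/2`.

The Cauchy kernel has degree less than `n` in every `x_i`, so its antisymmetrization is a scalar
multiple of `∏_{i<j} (x_i - x_j)`. At `x_i = 1 / y_i` every `τ(kernel)` with `τ ≠ 1` vanishes, and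
comparing values gives the scalar `∏_{i<j} (y_i - t y_j)`.
-/

namespace Stmt16

section Inversions

variable {α : Type*} [LinearOrder α]

theorem perm_eq_one_of_le_apply {β : Type*} [PartialOrder β] [Finite β] {τ : Equiv.Perm β}
    (h : ∀ b, b ≤ τ b) : τ = 1 := by
  ext b
  refine le_antisymm ?_ (h b)
  have hinv : ⇑(τ ^ (orderOf τ - 1)) (τ b) = b := by
    rw [← Equiv.Perm.mul_apply, pow_sub_one_mul (orderOf_pos τ).ne', pow_orderOf_eq_one,
      Equiv.Perm.one_apply]
  have hle := Function.id_le_iterate_of_id_le (f := τ) h (orderOf τ - 1) (τ b)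
  rwa [← Equiv.Perm.coe_pow, hinv] at hle

theorem swap_lt_swap_of_covBy {i j a b : α} (hij : i ⋖ j) (hab : a < b)
    (hne : (a, b) ≠ (i, j)) : Equiv.swap i j a < Equiv.swap i j b := by
  have hlt : i < j := hij.lt
  have hib : i < b → j ≤ b := hij.ge_of_gt
  have haj : a < j → a ≤ i := hij.le_of_lt
  simp only [Equiv.swap_apply_def]
  grind

theorem exists_covBy_apply_lt [Finite α] {σ : Equiv.Perm α} (hσ : σ ≠ 1) :
    ∃ i j, i ⋖ j ∧ σ j < σ i := by
  classical
  let := Fintype.ofFinite α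
  let := Fintype.toLocallyFiniteOrder (α := α)
  by_contra! hasc
  have hmono : StrictMono σ := (strictMono_iff_forall_covBy σ).2 fun i j hij =>
    (hasc i j hij).lt_of_ne (σ.injective.ne hij.ne)
  exact hσ (perm_eq_one_of_le_apply fun _ => hmono.le_apply)

variable [Fintype α]

variable (α) in
/-- The index set `{(i, j) | i < j}` of the products in the double alternant. -/
abbrev ltPairs : Finset (α × α) := univ.filter fun p : α × α => p.1 < p.2

/-- The inversions of `σ`, as pairs of positions; its cardinality is the length `l(σ)`. -/
def inversionSet (σ : Equiv.Perm α) : Finset (α × α) :=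
  univ.filter fun p : α × α => p.1 < p.2 ∧ σ p.2 < σ p.1

theorem mem_inversionSet {σ : Equiv.Perm α} {p : α × α} :
    p ∈ inversionSet σ ↔ p.1 < p.2 ∧ σ p.2 < σ p.1 := by
  simp only [inversionSet, mem_filter_univ]

theorem inversionSet_subset_ltPairs (σ : Equiv.Perm α) : inversionSet σ ⊆ ltPairs α :=
  fun _ hp => mem_filter_univ _ |>.2 (mem_inversionSet.1 hp).1

theorem inversionSet_one : inversionSet (1 : Equiv.Perm α) = ∅ :=
  filter_false_of_mem fun _ _ h => h.1.asymm h.2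

theorem inversionSet_of_strictAnti {σ : Equiv.Perm α} (hσ : StrictAnti σ) :
    inversionSet σ = ltPairs α :=
  filter_congr fun _ _ => and_iff_left_of_imp fun h => hσ h

theorem prod_inversionSet_of_strictAnti {M : Type*} [CommMonoid M] {σ : Equiv.Perm α}
    (hσ : StrictAnti σ) (b : α → α → M) :
    ∏ p ∈ inversionSet σ, b (σ p.2) (σ p.1) = ∏ p ∈ ltPairs α, b p.1 p.2 := by
  rw [inversionSet_of_strictAnti hσ]
  refine prod_equiv ((Equiv.prodComm α α).trans (σ.prodCongr σ)) (fun p => ?_) fun p _ => rfl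
  simp [hσ.lt_iff_gt]

section Swap

variable {σ : Equiv.Perm α} {i j : α}

theorem inversionSet_mul_swap (hij : i ⋖ j) (hσ : σ i < σ j) :
    inversionSet (σ * Equiv.swap i j) = insert (i, j) ((inversionSet σ).map
      ((Equiv.swap i j).prodCongr (Equiv.swap i j)).toEmbedding) := by
  ext ⟨a, b⟩
  rw [mem_insert, mem_map_equiv, mem_inversionSet, mem_inversionSet]
  simp only [Equiv.Perm.mul_apply, Equiv.prodCongr_symm, Equiv.symm_swap, Equiv.prodCongr_apply,
    Prod.map_apply]
  by_cases hab : (a, b) = (i, j)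
  · obtain ⟨rfl, rfl⟩ := Prod.mk.inj hab
    simp [hij.lt, hσ]
  · rw [or_iff_right hab]
    refine and_congr_left fun hlt => ⟨fun h => swap_lt_swap_of_covBy hij h hab, fun h => ?_⟩
    have hne : (Equiv.swap i j a, Equiv.swap i j b) ≠ (i, j) := by
      rintro heq
      obtain ⟨ha, hb⟩ := Prod.mk.inj heq
      rw [ha, hb] at hlt
      exact hlt.asymm hσ
    simpa using swap_lt_swap_of_covBy hij h hne

theorem notMem_map_swap_inversionSet (hij : i ⋖ j) : (i, j) ∉ (inversionSet σ).map
    ((Equiv.swap i j).prodCongr (Equiv.swap i j)).toEmbedding := by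
  rw [mem_map_equiv, mem_inversionSet]
  simp [hij.lt.le]

theorem card_inversionSet_mul_swap (hij : i ⋖ j) (hσ : σ i < σ j) :
    #(inversionSet (σ * Equiv.swap i j)) = #(inversionSet σ) + 1 := by
  rw [inversionSet_mul_swap hij hσ, card_insert_of_notMem (notMem_map_swap_inversionSet hij),
    card_map]

theorem card_inversionSet_le_card_mul_swap_add_one (hij : i ⋖ j) :
    #(inversionSet σ) ≤ #(inversionSet (σ * Equiv.swap i j)) + 1 := by
  rcases (σ.injective.ne hij.ne).lt_or_gt with hσ | hσ
  · have := card_inversionSet_mul_swap hij hσ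
    lia
  · have := card_inversionSet_mul_swap hij (σ := σ * Equiv.swap i j) (by simpa)
    rw [Equiv.mul_swap_mul_self] at this
    lia

theorem prod_inversionSet_mul_swap {M : Type*} [CommMonoid M] (hij : i ⋖ j) (hσ : σ i < σ j)
    (b : α → α → M) :
    ∏ p ∈ inversionSet (σ * Equiv.swap i j),
        b ((σ * Equiv.swap i j) p.2) ((σ * Equiv.swap i j) p.1) =
      b (σ i) (σ j) * ∏ p ∈ inversionSet σ, b (σ p.2) (σ p.1) := by
  rw [inversionSet_mul_swap hij hσ, prod_insert (notMem_map_swap_inversionSet hij), prod_map]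
  simp

end Swap

end Inversions

theorem perm_induction_mul_swap {α : Type*} [LinearOrder α] [Finite α]
    {P : Equiv.Perm α → Prop} (one : P 1)
    (mul_swap : ∀ σ i j, i ⋖ j → σ i < σ j → P σ → P (σ * Equiv.swap i j))
    (σ : Equiv.Perm α) : P σ := by
  let := Fintype.ofFinite α
  induction hm : #(inversionSet σ) using Nat.strong_induction_on generalizing σ with
  | _ m ih =>
    by_cases hσ : σ = 1
    · rwa [hσ]
    · obtain ⟨i, j, hij, hlt⟩ := exists_covBy_apply_lt hσ
      have hasc : (σ * Equiv.swap i j) i < (σ * Equiv.swap i j) j := by simpa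
      have hcard := card_inversionSet_mul_swap hij hasc
      have hP := mul_swap _ i j hij hasc (ih _ (by grind [Equiv.mul_swap_mul_self]) _ rfl)
      rwa [Equiv.mul_swap_mul_self] at hP

theorem sign_eq_neg_one_pow_card_inversionSet {α : Type*} [LinearOrder α] [Fintype α]
    (σ : Equiv.Perm α) : Equiv.Perm.sign σ = (-1) ^ #(inversionSet σ) := by
  induction σ using perm_induction_mul_swap with
  | one => simp [inversionSet_one]
  | mul_swap σ i j hij hσ ih =>
    rw [card_inversionSet_mul_swap hij hσ, Equiv.Perm.sign_mul, Equiv.Perm.sign_swap hij.ne, ih,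
      pow_succ]

section Operators

/-- `T` is the Demazure–Lustig operator for the variables `x_i, x_j`, i.e.
`T f = t f + (t x_i - x_j) (s f - f) / (x_i - x_j)` with `s` exchanging `x_i` and `x_j`; the
division is cleared, which determines `T f` as soon as `x_i - x_j` is not a zero divisor. -/
def IsDemazureLustig {ι R : Type*} [DecidableEq ι] [CommRing R] (t : R) (i j : ι)
    (T : Module.End R (MvPolynomial ι R)) : Prop :=
  ∀ f, (X i - X j) * T f =
    (X i - X j) * (C t * f) + (C t * X i - X j) * (rename (Equiv.swap i j) f - f)

theorem X_sub_X_ne_zero {ι R : Type*} [CommRing R] [Nontrivial R] {i j : ι} (hij : i ≠ j) :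
    (X i - X j : MvPolynomial ι R) ≠ 0 :=
  sub_ne_zero.2 (X_injective.ne hij)

theorem IsDemazureLustig.apply_eq_smul {ι R : Type*} [DecidableEq ι] [CommRing R] [IsDomain R]
    {t : R} {i j : ι} {T : Module.End R (MvPolynomial ι R)} (hT : IsDemazureLustig t i j T)
    (hij : i ≠ j) {f : MvPolynomial ι R} (hf : rename (Equiv.swap i j) f = f) : T f = t • f := by
  have h := hT f
  rw [hf, sub_self, mul_zero, add_zero] at h
  rw [smul_eq_C_mul]
  exact mul_left_cancel₀ (X_sub_X_ne_zero hij) h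

variable {α : Type*} [LinearOrder α]

/-- `Tw σ` is the product of the `T i j` along a reduced word of `σ`, where `T i j` is attached to
the adjacent transposition of `i ⋖ j`: right multiplication by that transposition increases the
length exactly when `σ i < σ j`. -/
structure IsReducedProduct {M : Type*} [Monoid M] (T : α → α → M) (Tw : Equiv.Perm α → M) :
    Prop where
  map_one : Tw 1 = 1
  map_mul_swap : ∀ σ i j, i ⋖ j → σ i < σ j → Tw (σ * Equiv.swap i j) = Tw σ * T i j

variable [Fintype α] {R V : Type*} [CommRing R] [AddCommGroup V] [Module R V]

/-- The operator `U⁻ = ∑ σ, (-t)^{-l(σ)} T_σ`. -/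
def qAntisymmetrizer (t : Rˣ) (Tw : Equiv.Perm α → Module.End R V) : Module.End R V :=
  ∑ σ, ((-t) ^ #(inversionSet σ))⁻¹ • Tw σ

theorem qAntisymmetrizer_apply (t : Rˣ) (Tw : Equiv.Perm α → Module.End R V) (v : V) :
    qAntisymmetrizer t Tw v = ∑ σ, ((-t) ^ #(inversionSet σ))⁻¹ • Tw σ v := by
  simp only [qAntisymmetrizer, LinearMap.sum_apply, LinearMap.smul_apply]

-- The terms of `σ` and `σ s` cancel, `s` being the transposition of `i` and `j`.
theorem qAntisymmetrizer_apply_eq_zero {t : Rˣ} {T : α → α → Module.End R V}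
    {Tw : Equiv.Perm α → Module.End R V} (hTw : IsReducedProduct T Tw) {i j : α} (hij : i ⋖ j)
    {v : V} (hv : T i j v = t • v) : qAntisymmetrizer t Tw v = 0 := by
  let term (σ : Equiv.Perm α) : V := ((-t) ^ #(inversionSet σ))⁻¹ • Tw σ v
  have cancel_of_lt (σ : Equiv.Perm α) (hσ : σ i < σ j) :
      term σ + term (σ * Equiv.swap i j) = 0 := by
    have hunits : ((-t) ^ (#(inversionSet σ) + 1))⁻¹ * t = -((-t) ^ #(inversionSet σ))⁻¹ := by
      rw [pow_succ, mul_inv, mul_assoc, inv_neg, neg_mul, inv_mul_cancel, mul_neg_one]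
    rw [add_comm]
    simp only [term]
    rw [hTw.map_mul_swap σ i j hij hσ, Module.End.mul_apply, hv, card_inversionSet_mul_swap hij hσ,
      Units.smul_def t, map_smul, ← Units.smul_def, smul_smul, hunits, Units.neg_smul,
      neg_add_cancel]
  rw [qAntisymmetrizer_apply]
  refine sum_involution (fun σ _ => σ * Equiv.swap i j) (fun σ _ => ?_) (fun σ _ _ => ?_)
    (fun _ _ => mem_univ _) fun σ _ => Equiv.mul_swap_mul_self i j σ
  · rcases (σ.injective.ne hij.ne).lt_or_gt with hσ | hσ
    · exact cancel_of_lt σ hσ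
    · have := cancel_of_lt (σ * Equiv.swap i j) (by simpa)
      rwa [Equiv.mul_swap_mul_self, add_comm] at this
  · simpa using hij.ne

theorem qAntisymmetrizer_rename_swap [IsDomain R] {t : Rˣ}
    {T : α → α → Module.End R (MvPolynomial α R)}
    (hT : ∀ i j, i ⋖ j → IsDemazureLustig ↑t i j (T i j))
    {Tw : Equiv.Perm α → Module.End R (MvPolynomial α R)} (hTw : IsReducedProduct T Tw)
    {i j : α} (hij : i ⋖ j) (f : MvPolynomial α R) :
    qAntisymmetrizer t Tw (rename (Equiv.swap i j) f) = -qAntisymmetrizer t Tw f := by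
  have hsymm : rename (Equiv.swap i j) (rename (Equiv.swap i j) f + f) =
      rename (Equiv.swap i j) f + f := by
    rw [map_add, rename_rename, ← Equiv.Perm.coe_mul, Equiv.swap_mul_self,
      Equiv.Perm.coe_one, rename_id_apply, add_comm]
  have hzero := qAntisymmetrizer_apply_eq_zero hTw hij ((hT i j hij).apply_eq_smul hij.ne hsymm)
  rw [map_add] at hzero
  exact eq_neg_of_add_eq_zero_left hzero

end Operators

section TwistedSum

theorem rename_mul {ι R : Type*} [CommSemiring R] (σ τ : Equiv.Perm ι) (f : MvPolynomial ι R) :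
    rename (σ * τ) f = rename σ (rename τ f) := by
  rw [rename_rename, Equiv.Perm.coe_mul]

variable {α R : Type*} [DecidableEq α] [CommRing R] {L : Type*} [Field L]
  [Algebra (MvPolynomial α R) L]

variable (R) in
/-- The coefficient `(t x_i - x_j) / (x_i - x_j)` of the transposition in the Demazure–Lustig
operator for `x_i, x_j`; the coefficient of the identity is `t` minus it. -/
noncomputable def transpositionCoeff (t : R) (i j : α) : L :=
  algebraMap (MvPolynomial α R) L (C t * X i - X j) / algebraMap (MvPolynomial α R) L (X i - X j)

/-- The coefficients of `(∑ τ, a τ • τ) T`, for `T` the Demazure–Lustig operator for `x_i, x_j`. -/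
noncomputable def mulDemazureLustig (t : R) (i j : α) (a : Equiv.Perm α → L) : Equiv.Perm α → L :=
  fun τ => a τ * (algebraMap (MvPolynomial α R) L (C t) - transpositionCoeff R t (τ i) (τ j)) +
    a (τ * Equiv.swap i j) * transpositionCoeff R t (τ j) (τ i)

theorem algebraMap_rename_demazureLustig [FaithfulSMul (MvPolynomial α R) L] [Nontrivial R]
    {t : R} {i j : α} (hij : i ≠ j) {T : Module.End R (MvPolynomial α R)}
    (hT : IsDemazureLustig t i j T) (τ : Equiv.Perm α) (f : MvPolynomial α R) :
    algebraMap (MvPolynomial α R) L (rename τ (T f)) =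
      (algebraMap (MvPolynomial α R) L (C t) - transpositionCoeff R t (τ i) (τ j)) *
        algebraMap (MvPolynomial α R) L (rename τ f) +
      transpositionCoeff R t (τ i) (τ j) *
        algebraMap (MvPolynomial α R) L (rename (τ * Equiv.swap i j) f) := by
  have hne : algebraMap (MvPolynomial α R) L (X (τ i) - X (τ j)) ≠ 0 :=
    (FaithfulSMul.algebraMap_eq_zero_iff _ L).not.2 (X_sub_X_ne_zero (τ.injective.ne hij))
  have h := congrArg (fun g => algebraMap (MvPolynomial α R) L (rename τ g)) (hT f)
  simp only [map_mul, map_sub, map_add, rename_X, rename_C, ← rename_mul] at h hne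
  apply mul_left_cancel₀ hne
  rw [h]
  simp only [transpositionCoeff, map_sub, map_mul]
  field_simp
  ring

variable [Fintype α]

variable (L) in
/-- The element `∑ τ, a τ • τ` of the twisted group algebra of `Perm α` over a field `L` containing
`R[x]`, as a function `R[x] → L`. -/
noncomputable def twistedSum : (Equiv.Perm α → L) →ₗ[L] (MvPolynomial α R → L) :=
  Fintype.linearCombination L fun τ f => algebraMap (MvPolynomial α R) L (rename τ f)

theorem twistedSum_apply (a : Equiv.Perm α → L) (f : MvPolynomial α R) :
    twistedSum L a f = ∑ τ, a τ * algebraMap (MvPolynomial α R) L (rename τ f) := by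
  simp only [twistedSum, Fintype.linearCombination_apply, Finset.sum_apply, Pi.smul_apply,
    smul_eq_mul]

theorem twistedSum_single_one (f : MvPolynomial α R) :
    twistedSum L (Pi.single 1 1) f = algebraMap (MvPolynomial α R) L f := by
  simp [twistedSum_apply, Pi.single_apply]

theorem twistedSum_rename_swap (a : Equiv.Perm α → L) (i j : α) (f : MvPolynomial α R) :
    twistedSum L a (rename (Equiv.swap i j) f) =
      twistedSum L (fun τ => a (τ * Equiv.swap i j)) f := by
  simp only [twistedSum_apply]
  rw [← Equiv.sum_comp (Equiv.mulRight (Equiv.swap i j))]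
  simp only [Equiv.coe_mulRight, ← rename_mul, Equiv.mul_swap_mul_self]

variable [FaithfulSMul (MvPolynomial α R) L]

theorem twistedSum_injective [Nontrivial R] :
    Function.Injective (twistedSum L : (Equiv.Perm α → L) → MvPolynomial α R → L) := by
  let character (τ : Equiv.Perm α) : MvPolynomial α R →* L :=
    (algebraMap (MvPolynomial α R) L).comp (rename τ : _ →ₐ[R] MvPolynomial α R).toRingHom
  have hcharacter : Function.Injective character := fun τ τ' h => Equiv.ext fun i => by
    have hX := FaithfulSMul.algebraMap_injective _ L (DFunLike.congr_fun h (X i))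
    simpa using hX
  exact ((linearIndependent_monoidHom _ L).comp character
    hcharacter).fintypeLinearCombination_injective

theorem twistedSum_apply_demazureLustig [Nontrivial R] {t : R} {i j : α} (hij : i ≠ j)
    {T : Module.End R (MvPolynomial α R)} (hT : IsDemazureLustig t i j T)
    (a : Equiv.Perm α → L) (f : MvPolynomial α R) :
    twistedSum L a (T f) = twistedSum L (mulDemazureLustig t i j a) f := by
  simp only [twistedSum_apply, mulDemazureLustig, algebraMap_rename_demazureLustig hij hT, mul_add,
    add_mul, sum_add_distrib, mul_assoc]
  congr 1
  rw [← Equiv.sum_comp (Equiv.mulRight (Equiv.swap i j))]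
  simp [Equiv.mul_swap_mul_self]

end TwistedSum

section LeadingTerm

variable {α : Type*} [LinearOrder α] [Fintype α]

/-- The element `∑ τ, a τ • τ` is `c • σ` plus a combination of permutations shorter than `σ`. -/
structure HasLeadingTerm {L : Type*} [Zero L] (a : Equiv.Perm α → L) (σ : Equiv.Perm α) (c : L) :
    Prop where
  apply_self : a σ = c
  apply_eq_zero : ∀ τ, #(inversionSet σ) ≤ #(inversionSet τ) → τ ≠ σ → a τ = 0

variable {R : Type*} [CommRing R] {L : Type*} [Field L] [Algebra (MvPolynomial α R) L]

theorem HasLeadingTerm.mulDemazureLustig {a : Equiv.Perm α → L} {σ : Equiv.Perm α} {c : L}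
    (ha : HasLeadingTerm a σ c) (t : R) {i j : α} (hij : i ⋖ j) (hσ : σ i < σ j) :
    HasLeadingTerm (mulDemazureLustig t i j a) (σ * Equiv.swap i j)
      (transpositionCoeff R t (σ i) (σ j) * c) where
  apply_self := by
    have hcard := card_inversionSet_mul_swap hij hσ
    have hzero : a (σ * Equiv.swap i j) = 0 :=
      ha.apply_eq_zero _ (by lia) (by simpa using hij.ne)
    simp [Stmt16.mulDemazureLustig, hzero, Equiv.mul_swap_mul_self, ha.apply_self, mul_comm]
  apply_eq_zero τ hle hne := by
    have hcard := card_inversionSet_mul_swap hij hσ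
    have hcard' := card_inversionSet_le_card_mul_swap_add_one (σ := τ) hij
    have hzero : a τ = 0 := ha.apply_eq_zero τ (by lia) (by rintro rfl; lia)
    have hzero' : a (τ * Equiv.swap i j) = 0 :=
      ha.apply_eq_zero _ (by lia) fun h => hne (by rw [← h, Equiv.mul_swap_mul_self])
    simp [Stmt16.mulDemazureLustig, hzero, hzero']

variable [FaithfulSMul (MvPolynomial α R) L] [Nontrivial R] {t : R}
  {T : α → α → Module.End R (MvPolynomial α R)}
  {Tw : Equiv.Perm α → Module.End R (MvPolynomial α R)}

theorem exists_twistedSum_eq_reducedProduct (hT : ∀ i j, i ⋖ j → IsDemazureLustig t i j (T i j))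
    (hTw : IsReducedProduct T Tw) (σ : Equiv.Perm α) : ∃ a : Equiv.Perm α → L,
      (∀ f, algebraMap (MvPolynomial α R) L (Tw σ f) = twistedSum L a f) ∧
      HasLeadingTerm a σ (∏ p ∈ inversionSet σ, transpositionCoeff R t (σ p.2) (σ p.1)) := by
  induction σ using perm_induction_mul_swap with
  | one =>
    refine ⟨Pi.single 1 1, fun f => ?_, ?_, fun τ _ hτ => Pi.single_eq_of_ne hτ 1⟩
    · rw [hTw.map_one, Module.End.one_apply, twistedSum_single_one]
    · rw [inversionSet_one, prod_empty, Pi.single_eq_same]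
  | mul_swap σ i j hij hσ ih =>
    obtain ⟨a, ha, hlead⟩ := ih
    refine ⟨mulDemazureLustig t i j a, fun f => ?_, ?_⟩
    · rw [hTw.map_mul_swap σ i j hij hσ, Module.End.mul_apply, ha,
        twistedSum_apply_demazureLustig hij.ne (hT i j hij)]
    · rw [prod_inversionSet_mul_swap hij hσ]
      exact hlead.mulDemazureLustig t hij hσ

theorem exists_twistedSum_eq_qAntisymmetrizer {t : Rˣ}
    (hT : ∀ i j, i ⋖ j → IsDemazureLustig (t : R) i j (T i j)) (hTw : IsReducedProduct T Tw)
    {w : Equiv.Perm α} (hw : StrictAnti w) : ∃ c : Equiv.Perm α → L,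
      (∀ f, algebraMap (MvPolynomial α R) L (qAntisymmetrizer t Tw f) = twistedSum L c f) ∧
      c w = algebraMap (MvPolynomial α R) L (C ↑((-t) ^ #(ltPairs α))⁻¹) *
        ∏ p ∈ ltPairs α, transpositionCoeff R (t : R) p.1 p.2 := by
  choose a ha hlead using exists_twistedSum_eq_reducedProduct (L := L) hT hTw
  let u (σ : Equiv.Perm α) : L := algebraMap (MvPolynomial α R) L (C ↑((-t) ^ #(inversionSet σ))⁻¹)
  refine ⟨∑ σ, u σ • a σ, fun f => ?_, ?_⟩
  · rw [qAntisymmetrizer_apply, map_sum, map_sum, Finset.sum_apply]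
    refine sum_congr rfl fun σ _ => ?_
    rw [Units.smul_def, smul_eq_C_mul, map_mul, map_smul, Pi.smul_apply, ← ha, smul_eq_mul]
  · rw [Finset.sum_apply, sum_eq_single_of_mem w (mem_univ w), Pi.smul_apply, smul_eq_mul,
      (hlead w).apply_self, prod_inversionSet_of_strictAnti hw, ← inversionSet_of_strictAnti hw]
    intro σ _ hσ
    have hle : #(inversionSet σ) ≤ #(inversionSet w) := by
      rw [inversionSet_of_strictAnti hw]
      exact card_le_card (inversionSet_subset_ltPairs σ)
    rw [Pi.smul_apply, (hlead σ).apply_eq_zero w hle hσ.symm, smul_zero]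

end LeadingTerm

section Alternant

variable {α : Type*} [Fintype α] [DecidableEq α] {R : Type*} [CommRing R]

variable (α R) in
/-- The antisymmetrization `f ↦ ∑ τ, sgn(τ) τ(f)` of polynomials. -/
noncomputable def alternant : MvPolynomial α R →ₗ[R] MvPolynomial α R :=
  ∑ τ : Equiv.Perm α, (Equiv.Perm.sign τ : ℤ) • (rename τ).toLinearMap

theorem alternant_apply (f : MvPolynomial α R) :
    alternant α R f = ∑ τ : Equiv.Perm α, (Equiv.Perm.sign τ : ℤ) • rename τ f := by
  simp only [alternant, LinearMap.sum_apply, LinearMap.smul_apply, AlgHom.toLinearMap_apply]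

end Alternant

theorem eq_sign_mul_apply_one_of_mul_swap_eq_neg {α L : Type*} [LinearOrder α] [Fintype α] [Ring L]
    {c : Equiv.Perm α → L} (hc : ∀ τ i j, i ⋖ j → c (τ * Equiv.swap i j) = -c τ)
    (τ : Equiv.Perm α) : c τ = (Equiv.Perm.sign τ : ℤ) * c 1 := by
  induction τ using perm_induction_mul_swap with
  | one => simp
  | mul_swap σ i j hij _ ih => simp [hc σ i j hij, ih, Equiv.Perm.sign_swap hij.ne]

section Formula

variable {α R : Type*} [LinearOrder α] [Fintype α] [CommRing R] [IsDomain R] {t : Rˣ}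
  {T : α → α → Module.End R (MvPolynomial α R)}
  {Tw : Equiv.Perm α → Module.End R (MvPolynomial α R)}

theorem algebraMap_qAntisymmetrizer {L : Type*} [Field L] [Algebra (MvPolynomial α R) L]
    [FaithfulSMul (MvPolynomial α R) L]
    (hT : ∀ i j, i ⋖ j → IsDemazureLustig (t : R) i j (T i j)) (hTw : IsReducedProduct T Tw)
    {w : Equiv.Perm α} (hw : StrictAnti w) (f : MvPolynomial α R) :
    algebraMap (MvPolynomial α R) L (qAntisymmetrizer t Tw f) =
      algebraMap (MvPolynomial α R) L (C ((↑t⁻¹ : R) ^ #(ltPairs α))) *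
        (∏ p ∈ ltPairs α, transpositionCoeff R (t : R) p.1 p.2) *
        algebraMap (MvPolynomial α R) L (alternant α R f) := by
  obtain ⟨c, hc, hcw⟩ := exists_twistedSum_eq_qAntisymmetrizer (L := L) hT hTw hw
  have hswap (τ : Equiv.Perm α) (i j : α) (hij : i ⋖ j) : c (τ * Equiv.swap i j) = -c τ := by
    suffices (fun τ => c (τ * Equiv.swap i j)) = -c from congrFun this τ
    refine twistedSum_injective (R := R) (funext fun g => ?_)
    rw [← twistedSum_rename_swap, ← hc, qAntisymmetrizer_rename_swap hT hTw hij, map_neg, hc,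
      map_neg, Pi.neg_apply]
  have hsign := eq_sign_mul_apply_one_of_mul_swap_eq_neg hswap
  have hone : c 1 = algebraMap (MvPolynomial α R) L (C ((↑t⁻¹ : R) ^ #(ltPairs α))) *
      ∏ p ∈ ltPairs α, transpositionCoeff R (t : R) p.1 p.2 := by
    have hsq : ((-1 : L) ^ #(ltPairs α)) * (-1) ^ #(ltPairs α) = 1 := by
      rw [← mul_pow, neg_one_mul, neg_neg, one_pow]
    have hunits : (-1 : R) ^ #(ltPairs α) * ↑((-t) ^ #(ltPairs α))⁻¹ = ↑t⁻¹ ^ #(ltPairs α) := by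
      simp [← inv_pow, ← mul_pow]
    have hw_sign : c w = (-1) ^ #(ltPairs α) * c 1 := by
      simp [hsign w, sign_eq_neg_one_pow_card_inversionSet, inversionSet_of_strictAnti hw]
    rw [← hunits, ← one_mul (c 1), ← hsq, mul_assoc, ← hw_sign, hcw]
    simp only [map_mul, map_pow, map_neg, map_one, mul_assoc]
  rw [hc, twistedSum_apply, ← hone, alternant_apply, map_sum, mul_sum]
  refine sum_congr rfl fun τ _ => ?_
  rw [hsign, map_zsmul, zsmul_eq_mul]
  ring

theorem prod_X_sub_X_mul_qAntisymmetrizer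
    (hT : ∀ i j, i ⋖ j → IsDemazureLustig (t : R) i j (T i j)) (hTw : IsReducedProduct T Tw)
    {w : Equiv.Perm α} (hw : StrictAnti w) (f : MvPolynomial α R) :
    (∏ p ∈ ltPairs α, (X p.1 - X p.2)) * qAntisymmetrizer t Tw f =
      C ((↑t⁻¹ : R) ^ #(ltPairs α)) * (∏ p ∈ ltPairs α, (C (t : R) * X p.1 - X p.2)) *
        alternant α R f := by
  let L := FractionRing (MvPolynomial α R)
  have hprod : algebraMap (MvPolynomial α R) L (∏ p ∈ ltPairs α, (X p.1 - X p.2)) *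
        ∏ p ∈ ltPairs α, transpositionCoeff R (t : R) p.1 p.2 =
      algebraMap (MvPolynomial α R) L (∏ p ∈ ltPairs α, (C (t : R) * X p.1 - X p.2)) := by
    rw [map_prod, map_prod, ← prod_mul_distrib]
    refine prod_congr rfl fun p hp => mul_div_cancel₀ _ ?_
    exact (FaithfulSMul.algebraMap_eq_zero_iff _ L).not.2
      (X_sub_X_ne_zero ((mem_filter_univ p).1 hp).ne)
  apply FaithfulSMul.algebraMap_injective _ L
  simp only [map_mul, algebraMap_qAntisymmetrizer hT hTw hw, ← hprod]
  ring

end Formula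

section Vandermonde

variable {n : ℕ} {R : Type*} [CommRing R]

theorem det_vandermonde_eq_prod_sub (v : Fin n → R) :
    (Matrix.vandermonde v).det =
      (-1) ^ #(ltPairs (Fin n)) * ∏ p ∈ ltPairs (Fin n), (v p.1 - v p.2) := by
  rw [Matrix.det_vandermonde, ← prod_const, ← prod_mul_distrib, prod_filter,
    ← univ_product_univ, prod_product]
  refine prod_congr rfl fun i _ => ?_
  rw [← prod_filter, filter_lt_eq_Ioi]
  exact prod_congr rfl fun j _ => by ring

theorem alternant_monomial_eq_det (g : Fin n → Fin n) {m : Fin n →₀ ℕ} (hm : ∀ i, m i = g i)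
    (r : R) : alternant (Fin n) R (monomial m r) =
      r • ((Matrix.vandermonde (X : Fin n → MvPolynomial (Fin n) R)).submatrix id g).det := by
  rw [alternant_apply, Matrix.det_apply, smul_sum]
  refine sum_congr rfl fun τ _ => ?_
  rw [monomial_eq, Finsupp.prod_fintype _ _ fun _ => pow_zero _]
  simp only [map_mul, map_prod, map_pow, rename_C, rename_X, hm, Matrix.submatrix_apply, id,
    Matrix.vandermonde_apply, smul_eq_C_mul, Units.smul_def, mul_smul_comm]

theorem alternant_monomial_mem_span {m : Fin n →₀ ℕ} (hm : ∀ i, m i < n) (r : R) :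
    alternant (Fin n) R (monomial m r) ∈
      Submodule.span R {∏ p ∈ ltPairs (Fin n), (X p.1 - X p.2)} := by
  let g (i : Fin n) : Fin n := ⟨m i, hm i⟩
  rw [alternant_monomial_eq_det g (fun _ => rfl) r]
  by_cases hg : Function.Injective g
  · let σ : Equiv.Perm (Fin n) := Equiv.ofBijective g (Finite.injective_iff_bijective.1 hg)
    refine Submodule.mem_span_singleton.2
      ⟨r * ((Equiv.Perm.sign σ : ℤ) * (-1) ^ #(ltPairs (Fin n))), ?_⟩
    rw [show g = σ from rfl, Matrix.det_permute', det_vandermonde_eq_prod_sub]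
    simp [smul_eq_C_mul, mul_assoc]
  · obtain ⟨i, j, hij, hne⟩ := Function.not_injective_iff.1 hg
    rw [Matrix.det_zero_of_column_eq hne fun k => by simp only [Matrix.submatrix_apply, hij],
      smul_zero]
    exact zero_mem _

theorem alternant_mem_span {f : MvPolynomial (Fin n) R} (hf : ∀ i, degreeOf i f < n) :
    alternant (Fin n) R f ∈ Submodule.span R {∏ p ∈ ltPairs (Fin n), (X p.1 - X p.2)} := by
  rw [f.as_sum, map_sum]
  exact sum_mem fun m hm => alternant_monomial_mem_span
    (fun i => (degreeOf_lt_iff i.pos).1 (hf i) m hm) _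

end Vandermonde

section CauchyKernel

/-- The kernel `∏_{i<j} (1 - x_j y_i) (1 - t x_i y_j)`, the `y_i` being elements of the coefficient
ring. -/
noncomputable def cauchyKernel {α R : Type*} [LinearOrder α] [Fintype α] [CommRing R] (t : R)
    (y : α → R) : MvPolynomial α R :=
  ∏ p ∈ ltPairs α, ((1 - X p.2 * C (y p.1)) * (1 - C t * X p.1 * C (y p.2)))

theorem map_alternant {α R S : Type*} [Fintype α] [DecidableEq α] [CommRing R] [CommRing S]
    (φ : R →+* S) (f : MvPolynomial α R) :
    map φ (alternant α R f) = alternant α S (map φ f) := by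
  simp only [alternant_apply, map_sum, map_zsmul, map_rename]

theorem map_cauchyKernel {α R S : Type*} [LinearOrder α] [Fintype α] [CommRing R] [CommRing S]
    (φ : R →+* S) (t : R) (y : α → R) :
    map φ (cauchyKernel t y) = cauchyKernel (φ t) (φ ∘ y) := by
  simp only [cauchyKernel, map_prod, map_mul, map_sub, map_one, map_X, map_C, Function.comp_apply]

theorem degreeOf_one_sub_C_mul_X_le {ι R : Type*} [DecidableEq ι] [CommRing R] [Nontrivial R]
    (i j : ι) (r : R) : degreeOf i (1 - C r * X j) ≤ if j = i then 1 else 0 := by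
  refine (degreeOf_sub_le _ _ _).trans (max_le (by simp) ((degreeOf_C_mul_le _ _ _).trans ?_))
  simp only [degreeOf_X, eq_comm, le_refl]

theorem degreeOf_cauchyKernel_lt {n : ℕ} {R : Type*} [CommRing R] [Nontrivial R] (t : R)
    (y : Fin n → R) (i : Fin n) : degreeOf i (cauchyKernel t y) < n := by
  have hfactor (p : Fin n × Fin n) :
      degreeOf i ((1 - X p.2 * C (y p.1)) * (1 - C t * X p.1 * C (y p.2))) ≤
        (if p.2 = i then 1 else 0) + (if p.1 = i then 1 else 0) := by
    rw [mul_comm (X p.2), mul_right_comm, ← C_mul]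
    exact (degreeOf_mul_le _ _ _).trans
      (add_le_add (degreeOf_one_sub_C_mul_X_le _ _ _) (degreeOf_one_sub_C_mul_X_le _ _ _))
  have hsnd : (ltPairs (Fin n)).filter (fun p => p.2 = i) = Iio i ×ˢ {i} := by
    ext ⟨a, b⟩
    simp only [mem_filter, mem_univ, true_and, mem_product, mem_singleton, mem_Iio]
    grind
  have hfst : (ltPairs (Fin n)).filter (fun p => p.1 = i) = {i} ×ˢ Ioi i := by
    ext ⟨a, b⟩
    simp only [mem_filter, mem_univ, true_and, mem_product, mem_singleton, mem_Ioi]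
    grind
  calc degreeOf i (cauchyKernel t y)
      ≤ ∑ p ∈ ltPairs (Fin n), ((if p.2 = i then 1 else 0) + (if p.1 = i then 1 else 0)) :=
        (degreeOf_prod_le _ _ _).trans (sum_le_sum fun p _ => hfactor p)
    _ = #(Iio i) + #(Ioi i) := by
        rw [sum_add_distrib, ← card_filter, ← card_filter, hsnd, hfst, card_product, card_product,
          card_singleton, mul_one, one_mul]
    _ < n := by rw [Fin.card_Iio, Fin.card_Ioi]; lia

variable {α F : Type*} [LinearOrder α] [Fintype α] [Field F]

theorem eval_inv_rename_cauchyKernel (t : F) {y : α → F} (hy : ∀ i, y i ≠ 0) {τ : Equiv.Perm α}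
    (hτ : τ ≠ 1) : eval (fun i => (y i)⁻¹) (rename τ (cauchyKernel t y)) = 0 := by
  obtain ⟨i, hi⟩ : ∃ i, τ i < i := by
    by_contra! hle
    exact hτ (perm_eq_one_of_le_apply hle)
  rw [cauchyKernel, map_prod, map_prod]
  apply prod_eq_zero (i := (τ i, i)) ((mem_filter_univ _).2 hi)
  simp [inv_mul_cancel₀ (hy _)]

theorem eval_inv_cauchyKernel (t : F) {y : α → F} (hy : ∀ i, y i ≠ 0) :
    eval (fun i => (y i)⁻¹) (cauchyKernel t y) = (∏ p ∈ ltPairs α, (y p.1 - t * y p.2)) *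
      eval (fun i => (y i)⁻¹) (∏ p ∈ ltPairs α, (X p.1 - X p.2)) := by
  rw [cauchyKernel, map_prod, map_prod, ← prod_mul_distrib]
  refine prod_congr rfl fun p _ => ?_
  have hfst := hy p.1
  have hsnd := hy p.2
  simp only [map_mul, map_sub, map_one, eval_X, eval_C]
  field_simp

-- Only the identity permutation contributes to the value at `x_i = 1 / y_i`.
theorem eval_inv_alternant_cauchyKernel (t : F) {y : α → F} (hy : ∀ i, y i ≠ 0) :
    eval (fun i => (y i)⁻¹) (alternant α F (cauchyKernel t y)) =
      (∏ p ∈ ltPairs α, (y p.1 - t * y p.2)) *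
        eval (fun i => (y i)⁻¹) (∏ p ∈ ltPairs α, (X p.1 - X p.2)) := by
  rw [alternant_apply, map_sum, sum_eq_single_of_mem 1 (mem_univ 1), ← eval_inv_cauchyKernel t hy]
  · simp
  · intro τ _ hτ
    rw [map_zsmul, eval_inv_rename_cauchyKernel t hy hτ, smul_zero]

theorem alternant_cauchyKernel_of_injective {n : ℕ} (t : F) {y : Fin n → F}
    (hy : ∀ i, y i ≠ 0) (hinj : Function.Injective y) :
    alternant (Fin n) F (cauchyKernel t y) =
      C (∏ p ∈ ltPairs (Fin n), (y p.1 - t * y p.2)) *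
        ∏ p ∈ ltPairs (Fin n), (X p.1 - X p.2) := by
  obtain ⟨c, hc⟩ := Submodule.mem_span_singleton.1
    (alternant_mem_span (degreeOf_cauchyKernel_lt t y))
  have hne : eval (fun i => (y i)⁻¹) (∏ p ∈ ltPairs (Fin n), (X p.1 - X p.2)) ≠ 0 := by
    rw [map_prod, prod_ne_zero_iff]
    intro p hp
    rw [map_sub, eval_X, eval_X, sub_ne_zero]
    exact inv_injective.ne (hinj.ne ((mem_filter_univ p).1 hp).ne)
  have heval := eval_inv_alternant_cauchyKernel t hy
  rw [← hc, smul_eq_C_mul, map_mul, eval_C] at heval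
  rw [← hc, smul_eq_C_mul, mul_right_cancel₀ hne heval]

theorem alternant_cauchyKernel {n : ℕ} {R : Type*} [CommRing R] (t : R) (y : Fin n → R) :
    alternant (Fin n) R (cauchyKernel t y) =
      C (∏ p ∈ ltPairs (Fin n), (y p.1 - t * y p.2)) *
        ∏ p ∈ ltPairs (Fin n), (X p.1 - X p.2) := by
  -- It suffices to treat independent `t` and `y`, with integer coefficients.
  let S := MvPolynomial (Option (Fin n)) ℤ
  let Y (i : Fin n) : S := X (some i)
  let ι : S →+* FractionRing S := algebraMap S (FractionRing S)
  have hι : Function.Injective ι := FaithfulSMul.algebraMap_injective _ _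
  have huniversal : alternant (Fin n) S (cauchyKernel (X none) Y) =
      C (∏ p ∈ ltPairs (Fin n), (Y p.1 - X none * Y p.2)) *
        ∏ p ∈ ltPairs (Fin n), (X p.1 - X p.2) := by
    apply map_injective ι hι
    have h := alternant_cauchyKernel_of_injective (ι (X none)) (y := ι ∘ Y)
      (fun i => (map_ne_zero_iff ι hι).2 (X_ne_zero _))
      (hι.comp ((X_injective (R := ℤ)).comp (Option.some_injective _)))
    rw [map_alternant, map_cauchyKernel, h]
    simp [map_prod]
  let φ : S →+* R := eval₂Hom (Int.castRingHom R) fun o => o.elim t y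
  have ht : φ (X none) = t := eval₂_X _ _ _
  have hY : φ ∘ Y = y := funext fun _ => eval₂_X _ _ _
  have hY' (i : Fin n) : φ (Y i) = y i := congrFun hY i
  have h := congrArg (map φ) huniversal
  rw [map_alternant, map_cauchyKernel, ht, hY] at h
  simpa [map_prod, ht, hY'] using h

end CauchyKernel

theorem stmt_16_general {n : ℕ} {R : Type*} [CommRing R] [IsDomain R] {t : Rˣ}
    {T : Fin n → Fin n → Module.End R (MvPolynomial (Fin n) R)}
    (hT : ∀ i j, i ⋖ j → IsDemazureLustig (t : R) i j (T i j))
    {Tw : Equiv.Perm (Fin n) → Module.End R (MvPolynomial (Fin n) R)}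
    (hTw : IsReducedProduct T Tw) (y : Fin n → R) :
    qAntisymmetrizer t Tw (cauchyKernel (t : R) y) =
      (∏ p ∈ ltPairs (Fin n), (C (t : R) * X p.1 - X p.2)) *
        C (∏ p ∈ ltPairs (Fin n), (↑t⁻¹ * y p.1 - y p.2)) := by
  have hne : (∏ p ∈ ltPairs (Fin n), (X p.1 - X p.2) : MvPolynomial (Fin n) R) ≠ 0 :=
    prod_ne_zero_iff.2 fun p hp => X_sub_X_ne_zero ((mem_filter_univ p).1 hp).ne
  have hscale : (↑t⁻¹ : R) ^ #(ltPairs (Fin n)) * ∏ p ∈ ltPairs (Fin n), (y p.1 - t * y p.2) =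
      ∏ p ∈ ltPairs (Fin n), (↑t⁻¹ * y p.1 - y p.2) := by
    simp only [← prod_const, ← prod_mul_distrib, mul_sub, Units.inv_mul_cancel_left]
  apply mul_left_cancel₀ hne
  rw [prod_X_sub_X_mul_qAntisymmetrizer hT hTw (w := Fin.revPerm) Fin.rev_strictAnti,
    alternant_cauchyKernel, ← hscale, C_mul]
  ring

section Translation

variable {n : ℕ}

theorem t_ne_zero : t ≠ 0 :=
  (FaithfulSMul.algebraMap_eq_zero_iff _ K).not.2 (X_ne_zero 1)

variable (n) in
/-- The parameter `t` as a unit of the coefficient ring `K[y_1,…,y_n]`. -/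
noncomputable def tUnit : (Ry n)ˣ :=
  Units.map (C : K →+* Ry n) (Units.mk0 t t_ne_zero)

theorem sPerm_eq_swap {i j : Fin n} (hij : i ⋖ j) : sPerm n i = Equiv.swap i j := by
  obtain ⟨j, hj⟩ := j
  obtain rfl : j = i + 1 := (Nat.covBy_iff_add_one_eq.1 (Fin.covBy_iff.1 hij)).symm
  exact dif_pos hj

theorem IsDL.isDemazureLustig {T : ℕ → Module.End (Ry n) (Pxy n)} (hT : IsDL n T) (i j : Fin n)
    (hij : i ⋖ j) : IsDemazureLustig (tUnit n : Ry n) i j (T i) := by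
  obtain ⟨j, hj⟩ := j
  obtain rfl : j = i + 1 := (Nat.covBy_iff_add_one_eq.1 (Fin.covBy_iff.1 hij)).symm
  intro f
  have hs : sOp n i f = rename (Equiv.swap i ⟨i + 1, hj⟩) f := by
    rw [sOp, dif_pos hj, AlgHom.toLinearMap_apply]
  rw [← hs]
  exact hT i hj f

theorem IsTsigma.isReducedProduct {T : ℕ → Module.End (Ry n) (Pxy n)}
    {Tw : Equiv.Perm (Fin n) → Module.End (Ry n) (Pxy n)} (hTw : IsTsigma n T Tw) :
    IsReducedProduct (fun (i _ : Fin n) => T i) Tw where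
  map_one := hTw.1
  map_mul_swap σ i j hij hσ := by
    have hi : (i : ℕ) + 1 < n := (Nat.covBy_iff_add_one_eq.1 (Fin.covBy_iff.1 hij)).trans_lt j.isLt
    have h := hTw.2 σ i hi
    rw [sPerm_eq_swap hij] at h
    exact h (card_inversionSet_mul_swap hij hσ)

theorem uminus_eq_qAntisymmetrizer (Tw : Equiv.Perm (Fin n) → Module.End (Ry n) (Pxy n)) :
    Uminus n Tw = qAntisymmetrizer (V := Pxy n) (tUnit n) Tw := by
  have hcoeff (m : ℕ) : (C (((-t) ^ m)⁻¹) : Ry n) = ↑((-tUnit n) ^ m)⁻¹ := by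
    have hunit : -tUnit n = Units.map (C : K →+* Ry n) (-Units.mk0 t t_ne_zero) := by
      ext1; simp [tUnit]
    rw [hunit, ← map_pow, ← map_inv, Units.coe_map]
    simp only [MonoidHom.coe_coe, Units.val_inv_eq_inv_val, Units.val_pow_eq_pow_val,
      Units.val_neg, Units.val_mk0]
  exact sum_congr rfl fun σ _ => congrArg (· • Tw σ) (hcoeff _)

end Translation

end Stmt16

theorem stmt_16 (n : ℕ)
    (T : ℕ → Pxy n →ₗ[Ry n] Pxy n) (hT : IsDL n T)
    (Tw : Equiv.Perm (Fin n) → Pxy n →ₗ[Ry n] Pxy n) (hTw : IsTsigma n T Tw) :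
    Uminus n Tw
        (∏ p ∈ univ.filter fun p : Fin n × Fin n => p.1 < p.2,
          ((1 - X p.2 * C (X p.1)) * (1 - C (C t) * X p.1 * C (X p.2)))) =
      (∏ p ∈ univ.filter fun p : Fin n × Fin n => p.1 < p.2, (C (C t) * X p.1 - X p.2)) *
      C (∏ p ∈ univ.filter fun p : Fin n × Fin n => p.1 < p.2, (C t⁻¹ * X p.1 - X p.2)) := by
  rw [uminus_eq_qAntisymmetrizer]
  exact stmt_16_general hT.isDemazureLustig hTw.isReducedProduct X
end
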